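/- Let n ≥ 2, let α_1,…,α_n ∈ ℂ with Σ_j |α_j| = 1 and α_j ≠ 0 for all j, let g(z) = α_1 z_1ⁿ + … + α_n z_nⁿ, and define Φ : 𝔻ⁿ → 𝔻ⁿ by Φ(z) = (g(z), g(z), …, g(z), 0) (the first n-1 components equal g(z), the last component is 0). Then for β > -1 the composition operator C_Φ is bounded on A²_β(𝔻ⁿ) if and only if n/2 ≤ β + 5/2. -/

import Mathlib

open MeasureTheory Metric Set ENNReal

noncomputable section

/-- The open unit polydisc in `ℂⁿ`. -/
def polydisc (n : ℕ) : Set (Fin n → ℂ) := {z | ∀ j, ‖z j‖ < 1}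

/-- The closed unit polydisc in `ℂⁿ`. -/
def closedPolydisc (n : ℕ) : Set (Fin n → ℂ) := {z | ∀ j, ‖z j‖ ≤ 1}

/-- The distinguished boundary (torus) of the polydisc. -/
def torus (n : ℕ) : Set (Fin n → ℂ) := {z | ∀ j, ‖z j‖ = 1}

/-- The weighted Bergman measure `V_β` on the polydisc: the product of the measures
`dA_β(z) = (β+1)(1-|z|²)^β dA(z)`, where `dA` is normalized area measure on the unit disc. -/
def Vbeta (n : ℕ) (β : ℝ) : Measure (Fin n → ℂ) :=
  (volume.restrict (polydisc n)).withDensity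
    (fun z => ENNReal.ofReal (∏ j, ((β + 1) * (1 - ‖z j‖ ^ 2) ^ β / Real.pi)))

/-- The composition operator `C_Φ` is bounded on the weighted Bergman space `A²_β(𝔻ⁿ)`. -/
def bddBergman (n : ℕ) (β : ℝ) (Φ : (Fin n → ℂ) → (Fin n → ℂ)) : Prop :=
  ∃ C > (0:ℝ), ∀ f : (Fin n → ℂ) → ℂ, DifferentiableOn ℂ f (polydisc n) →
    ∫⁻ z, ENNReal.ofReal (‖f (Φ z)‖ ^ 2) ∂(Vbeta n β) ≤
      ENNReal.ofReal C * ∫⁻ z, ENNReal.ofReal (‖f z‖ ^ 2) ∂(Vbeta n β)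


theorem lint_fin_prod (μ : Measure ℂ) [SigmaFinite μ] : ∀ (n : ℕ) (f : Fin n → ℂ → ℝ≥0∞),
    (∀ i, Measurable (f i)) →
    ∫⁻ z, ∏ i, f i (z i) ∂(Measure.pi (fun _ : Fin n => μ)) = ∏ i, ∫⁻ x, f i x ∂μ
  | 0, f, hf => by
    simp
  | n+1, f, hf => by
    have h := (measurePreserving_piFinSuccAbove (fun _ : Fin (n+1) => μ) 0).symm
    rw [← h.lintegral_comp_emb (MeasurableEquiv.measurableEmbedding _)]
    rw [lintegral_prod]
    · simp only [Fin.prod_univ_succ]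
      have ih := lint_fin_prod μ n (fun i => f i.succ) (fun i => hf _)
      rw [← ih, ← lintegral_mul_const _ (hf 0)]
      apply lintegral_congr
      intro x
      rw [← lintegral_const_mul]
      · apply lintegral_congr
        intro y
        simp [MeasurableEquiv.piFinSuccAbove, Fin.insertNthEquiv]
      · exact Finset.measurable_prod _ (fun i _ => (hf i.succ).comp (measurable_pi_apply i))
    · apply Measurable.aemeasurable
      have h1 : Measurable (fun z : Fin (n+1) → ℂ => ∏ i, f i (z i)) :=
        Finset.measurable_prod _ (fun i _ => (hf i).comp (measurable_pi_apply i))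
      exact h1.comp (MeasurableEquiv.measurable _)

/-- density -/
def densB (β : ℝ) (z : ℂ) : ℝ≥0∞ := ENNReal.ofReal ((β + 1) * (1 - ‖z‖ ^ 2) ^ β / Real.pi)

theorem measurable_densB (β : ℝ) : Measurable (densB β) := by
  unfold densB
  fun_prop

/-- one-variable weighted measure -/
def Abeta (β : ℝ) : Measure ℂ := (volume.restrict (ball (0:ℂ) 1)).withDensity (densB β)

theorem densB_lt_top (β : ℝ) (z : ℂ) : densB β z < ∞ := ENNReal.ofReal_lt_top

instance (β : ℝ) : SigmaFinite (Abeta β) := by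
  unfold Abeta
  exact SigmaFinite.withDensity_of_ne_top (ae_of_all _ fun z => (densB_lt_top β z).ne)

theorem polydisc_eq (n : ℕ) : polydisc n = univ.pi (fun _ : Fin n => ball (0:ℂ) 1) := by
  ext z; simp [polydisc]

theorem measurableSet_polydisc (n : ℕ) : MeasurableSet (polydisc n) := by
  rw [polydisc_eq]
  exact MeasurableSet.univ_pi (fun _ => measurableSet_ball)

theorem Vbeta_eq (n : ℕ) (β : ℝ) (hβ : -1 < β) :
    Vbeta n β = Measure.pi (fun _ : Fin n => Abeta β) := by
  symm
  apply Measure.pi_eq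
  intro s hs
  have hpi : MeasurableSet (univ.pi s) := MeasurableSet.univ_pi hs
  unfold Vbeta
  rw [withDensity_apply _ hpi, Measure.restrict_restrict hpi]
  have e1 : ∫⁻ z in univ.pi s ∩ polydisc n,
      ENNReal.ofReal (∏ j, ((β + 1) * (1 - ‖z j‖ ^ 2) ^ β / Real.pi)) =
      ∫⁻ z in univ.pi s ∩ polydisc n, ∏ j, densB β (z j) := by
    apply setLIntegral_congr_fun (hpi.inter (measurableSet_polydisc n))
    intro z hz
    unfold densB
    simp only
    rw [ENNReal.ofReal_prod_of_nonneg]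
    intro j _
    have h1 : ‖z j‖ < 1 := hz.2 j
    have h2 : 0 ≤ 1 - ‖z j‖^2 := by nlinarith [norm_nonneg (z j)]
    have h3 : 0 ≤ β + 1 := by linarith
    positivity
  rw [e1, polydisc_eq, ← pi_inter_distrib]
  rw [← lintegral_indicator (MeasurableSet.univ_pi (fun i => (hs i).inter measurableSet_ball))]
  have e2 : (univ.pi fun i => s i ∩ ball (0:ℂ) 1).indicator (fun z => ∏ j, densB β (z j)) =
      fun z => ∏ j, (s j ∩ ball (0:ℂ) 1).indicator (densB β) (z j) := by
    ext z
    by_cases h : z ∈ univ.pi fun i => s i ∩ ball (0:ℂ) 1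
    · rw [indicator_of_mem h]
      apply Finset.prod_congr rfl
      intro j _
      rw [indicator_of_mem (h j (mem_univ j))]
    · rw [indicator_of_notMem h]
      have : ∃ j, z j ∉ s j ∩ ball (0:ℂ) 1 := by
        by_contra hc
        push Not at hc
        exact h fun j _ => hc j
      obtain ⟨j, hj⟩ := this
      symm
      apply Finset.prod_eq_zero (Finset.mem_univ j)
      rw [indicator_of_notMem hj]
  rw [e2, volume_pi, lint_fin_prod volume n _ (fun i => (measurable_densB β).indicator ((hs i).inter measurableSet_ball))]
  apply Finset.prod_congr rfl
  intro j _
  rw [lintegral_indicator ((hs j).inter measurableSet_ball), Abeta, withDensity_apply _ (hs j),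
    Measure.restrict_restrict (hs j)]

theorem Abeta_rot (β : ℝ) (c : ℂ) (hc : ‖c‖ = 1) :
    MeasurePreserving (fun z => c * z) (Abeta β) (Abeta β) := by
  have hm : Measurable (fun z : ℂ => c * z) := by fun_prop
  have hv : MeasurePreserving (fun z : ℂ => c * z) volume volume := by
    have hcc : c ∈ Submonoid.unitSphere ℂ := by
      rw [← SetLike.mem_coe, Submonoid.coe_unitSphere]; simpa using hc
    have h1 : MeasurePreserving (rotation (⟨c, hcc⟩ : Circle)) volume volume :=
      LinearIsometryEquiv.measurePreserving _
    exact h1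
  refine ⟨hm, ?_⟩
  ext s hs
  rw [Measure.map_apply hm hs]
  unfold Abeta
  rw [withDensity_apply _ (hm hs), withDensity_apply _ hs, Measure.restrict_restrict hs,
    Measure.restrict_restrict (hm hs)]
  rw [← lintegral_indicator (hs.inter measurableSet_ball),
    ← lintegral_indicator ((hm hs).inter measurableSet_ball)]
  rw [← hv.lintegral_comp ((measurable_densB β).indicator (hs.inter measurableSet_ball))]
  apply lintegral_congr
  intro z
  have hz : ‖c * z‖ = ‖z‖ := by rw [norm_mul, hc, one_mul]
  have hd : densB β (c * z) = densB β z := by simp only [densB, hz]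
  have hiff : z ∈ (fun z => c * z) ⁻¹' s ∩ ball 0 1 ↔ c * z ∈ s ∩ ball 0 1 := by
    simp [hc]
  by_cases h : z ∈ (fun z => c * z) ⁻¹' s ∩ ball 0 1
  · rw [indicator_of_mem h, indicator_of_mem (hiff.1 h), hd]
  · rw [indicator_of_notMem h, indicator_of_notMem (fun h' => h (hiff.2 h'))]

theorem V_rot (n : ℕ) (β : ℝ) (hβ : -1 < β) (c : Fin n → ℂ) (hc : ∀ j, ‖c j‖ = 1) :
    MeasurePreserving (fun (z : Fin n → ℂ) j => c j * z j) (Vbeta n β) (Vbeta n β) := by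
  rw [Vbeta_eq n β hβ]
  exact measurePreserving_pi _ _ (fun j => Abeta_rot β (c j) (hc j))


/-- polar coordinates -/
def pol (r θ : ℝ) : ℂ := (r : ℂ) * Complex.exp (θ * Complex.I)

/-- radial weight -/
def wt (β r : ℝ) : ℝ≥0∞ := ENNReal.ofReal ((β + 1) / Real.pi * (1 - r ^ 2) ^ β * r)

theorem measurable_wt (β : ℝ) : Measurable (wt β) := by unfold wt; fun_prop

theorem norm_pol (r θ : ℝ) (hr : 0 ≤ r) : ‖pol r θ‖ = r := by
  simp [pol, Complex.norm_exp_ofReal_mul_I, abs_of_nonneg hr]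

theorem continuous_pol : Continuous (fun p : ℝ × ℝ => pol p.1 p.2) := by unfold pol; fun_prop

theorem lint_polar (β : ℝ) (hβ : -1 < β) (F : ℂ → ℝ≥0∞) (hF : Measurable F) :
    ∫⁻ z, F z ∂(Abeta β) =
      ∫⁻ p in Ioo (0:ℝ) 1 ×ˢ Ioo (-Real.pi) Real.pi, wt β p.1 * F (pol p.1 p.2) := by
  unfold Abeta
  rw [lintegral_withDensity_eq_lintegral_mul _ (measurable_densB β) hF,
    ← lintegral_indicator measurableSet_ball, ← Complex.lintegral_comp_polarCoord_symm]
  have hm1 : MeasurableSet (Ioo (0:ℝ) 1 ×ˢ Ioo (-Real.pi) Real.pi) :=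
    measurableSet_Ioo.prod measurableSet_Ioo
  have hm2 : MeasurableSet polarCoord.target := by
    exact (polarCoord.open_target).measurableSet
  rw [← lintegral_indicator hm1, ← lintegral_indicator hm2]
  apply lintegral_congr
  rintro ⟨r, θ⟩
  have hs : Complex.polarCoord.symm (r, θ) = pol r θ := by
    rw [Complex.polarCoord_symm_apply, pol, Complex.exp_mul_I]; simp
  by_cases ht : (r, θ) ∈ polarCoord.target
  · rw [indicator_of_mem ht]
    have ht' : 0 < r ∧ -Real.pi < θ ∧ θ < Real.pi := by
      simpa [polarCoord_target] using ht
    rw [hs]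
    by_cases hr : r < 1
    · have hb : pol r θ ∈ ball (0:ℂ) 1 := by
        rw [mem_ball_zero_iff, norm_pol r θ ht'.1.le]; exact hr
      rw [indicator_of_mem hb, indicator_of_mem (by exact ⟨⟨ht'.1, hr⟩, ht'.2⟩)]
      simp only [Pi.mul_apply, densB, wt, smul_eq_mul, norm_pol r θ ht'.1.le]
      rw [← mul_assoc, ← ENNReal.ofReal_mul ht'.1.le]
      congr 2; ring
    · have hb : pol r θ ∉ ball (0:ℂ) 1 := by
        rw [mem_ball_zero_iff, norm_pol r θ ht'.1.le]; exact hr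
      rw [indicator_of_notMem hb, indicator_of_notMem (by rintro ⟨⟨_, h⟩, _⟩; exact hr h)]
      simp
  · rw [indicator_of_notMem ht, indicator_of_notMem]
    rintro ⟨⟨h1, h2⟩, h3⟩
    exact ht (by simpa [polarCoord_target] using ⟨h1, h3⟩)

theorem lint_wt (β : ℝ) (hβ : -1 < β) (δ : ℝ) (hδ : 0 < δ) (hδ1 : δ ≤ 1) :
    ∫⁻ r in Ioo (1 - δ) 1, wt β r = ENNReal.ofReal ((2 * δ - δ ^ 2) ^ (β + 1) / (2 * Real.pi)) := by
  have hle : 1 - δ ≤ 1 := by linarith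
  have hcont : ContinuousOn (fun r : ℝ => -(1 - r ^ 2) ^ (β + 1) / (2 * Real.pi)) (Icc (1 - δ) 1) := by
    apply Continuous.continuousOn
    have : Continuous (fun r : ℝ => (1 - r ^ 2) ^ (β + 1)) :=
      Continuous.rpow_const (by fun_prop) (fun x => Or.inr (by linarith))
    fun_prop
  have hder : ∀ r ∈ Ioo (1 - δ) 1, HasDerivAt (fun r : ℝ => -(1 - r ^ 2) ^ (β + 1) / (2 * Real.pi))
      ((β + 1) / Real.pi * (1 - r ^ 2) ^ β * r) r := by
    intro r hr
    have h0 : 0 < 1 - r ^ 2 := by nlinarith [hr.1, hr.2]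
    have h1 : HasDerivAt (fun r : ℝ => 1 - r ^ 2) (-(2 * r)) r := by
      simpa using (hasDerivAt_pow 2 r).const_sub 1
    have h2 := (h1.rpow_const (p := β + 1) (Or.inl h0.ne')).neg.div_const (2 * Real.pi)
    have h3 : -(-(2 * r) * (β + 1) * (1 - r ^ 2) ^ (β + 1 - 1)) / (2 * Real.pi) =
        (β + 1) / Real.pi * (1 - r ^ 2) ^ β * r := by
      rw [add_sub_cancel_right]
      field_simp
    rw [h3] at h2
    exact h2
  have hnn : ∀ r ∈ Ioo (1 - δ) 1, 0 ≤ (β + 1) / Real.pi * (1 - r ^ 2) ^ β * r := by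
    intro r hr
    have h0 : 0 < 1 - r ^ 2 := by nlinarith [hr.1, hr.2]
    have h1 : 0 ≤ r := by linarith [hr.1]
    have h2 : 0 ≤ β + 1 := by linarith
    positivity
  have hIntg : IntervalIntegrable (fun r : ℝ => (β + 1) / Real.pi * (1 - r ^ 2) ^ β * r) volume (1 - δ) 1 := by
    apply intervalIntegral.intervalIntegrable_deriv_of_nonneg (g := fun r : ℝ => -(1 - r ^ 2) ^ (β + 1) / (2 * Real.pi))
    · rwa [uIcc_of_le hle]
    · rwa [min_eq_left hle, max_eq_right hle]
    · rwa [min_eq_left hle, max_eq_right hle]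
  have hI := intervalIntegral.integral_eq_sub_of_hasDerivAt_of_le hle hcont hder hIntg
  rw [intervalIntegral.integral_of_le hle, integral_Ioc_eq_integral_Ioo] at hI
  have hi2 : IntegrableOn (fun r : ℝ => (β + 1) / Real.pi * (1 - r ^ 2) ^ β * r) (Ioo (1 - δ) 1) :=
    ((intervalIntegrable_iff_integrableOn_Ioo_of_le hle).1 hIntg)
  unfold wt
  rw [← ofReal_integral_eq_lintegral_ofReal hi2, hI]
  · congr 1
    have : (0:ℝ) ^ (β + 1) = 0 := Real.zero_rpow (by linarith)
    norm_num [this]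
    rw [show 1 - (1 - δ) ^ 2 = 2 * δ - δ ^ 2 by ring]
    ring
  · rw [Filter.EventuallyLE, ae_restrict_iff' measurableSet_Ioo]
    exact ae_of_all _ hnn

theorem Abeta_rect (β : ℝ) (hβ : -1 < β) (δ : ℝ) (hδ : 0 < δ) (hδ1 : δ ≤ 1) (Θ : Set ℝ) :
    ∫⁻ p in Ioo (1 - δ) 1 ×ˢ Θ, wt β p.1 =
      ENNReal.ofReal ((2 * δ - δ ^ 2) ^ (β + 1) / (2 * Real.pi)) * volume Θ := by
  rw [← lint_wt β hβ δ hδ hδ1, Measure.volume_eq_prod, ← Measure.prod_restrict]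
  have := lintegral_prod_mul (μ := volume.restrict (Ioo (1 - δ) 1)) (ν := volume.restrict Θ)
    (f := wt β) (g := fun _ => 1) (measurable_wt β).aemeasurable aemeasurable_const
  simpa using this

theorem Abeta_upper (β : ℝ) (hβ : -1 < β) (δ : ℝ) (hδ : 0 < δ) (hδ1 : δ ≤ 1) (Θ : Set ℝ)
    (S : Set ℂ) (hS : MeasurableSet S)
    (h : ∀ r ∈ Ioo (0:ℝ) 1, ∀ θ ∈ Ioo (-Real.pi) Real.pi, pol r θ ∈ S → 1 - δ < r ∧ θ ∈ Θ) :
    Abeta β S ≤ ENNReal.ofReal ((2 * δ) ^ (β + 1)) * volume Θ := by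
  have h1 : Abeta β S = ∫⁻ z, S.indicator 1 z ∂(Abeta β) := by
    rw [lintegral_indicator_one hS]
  have hmT : MeasurableSet ((fun p : ℝ × ℝ => pol p.1 p.2) ⁻¹' S) := continuous_pol.measurable hS
  have hm1 : MeasurableSet (Ioo (0:ℝ) 1 ×ˢ Ioo (-Real.pi) Real.pi) :=
    measurableSet_Ioo.prod measurableSet_Ioo
  have h2 : ∀ p : ℝ × ℝ, wt β p.1 * S.indicator 1 (pol p.1 p.2) =
      ((fun p : ℝ × ℝ => pol p.1 p.2) ⁻¹' S).indicator (fun p : ℝ × ℝ => wt β p.1) p := by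
    intro p
    by_cases hp : pol p.1 p.2 ∈ S
    · rw [indicator_of_mem hp, indicator_of_mem (by exact hp)]; simp
    · rw [indicator_of_notMem hp, indicator_of_notMem (by exact hp)]; simp
  rw [h1, lint_polar β hβ _ (measurable_one.indicator hS)]
  simp only [h2]
  rw [lintegral_indicator hmT, Measure.restrict_restrict hmT]
  calc _ ≤ ∫⁻ p in Ioo (1 - δ) 1 ×ˢ Θ, wt β p.1 := by
        apply lintegral_mono_set
        rintro ⟨r, θ⟩ ⟨hp1, hp2, hp3⟩
        obtain ⟨ha, hb⟩ := h r hp2 θ hp3 hp1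
        exact ⟨⟨ha, hp2.2⟩, hb⟩
    _ = _ := Abeta_rect β hβ δ hδ hδ1 Θ
    _ ≤ _ := by
      gcongr
      have hpi : 1 ≤ 2 * Real.pi := by linarith [Real.pi_gt_three]
      have h0 : 0 ≤ 2 * δ - δ ^ 2 := by nlinarith
      calc (2 * δ - δ ^ 2) ^ (β + 1) / (2 * Real.pi) ≤ (2 * δ - δ ^ 2) ^ (β + 1) :=
            div_le_self (by positivity) hpi
        _ ≤ (2 * δ) ^ (β + 1) :=
            Real.rpow_le_rpow h0 (by nlinarith) (by linarith)

theorem Abeta_lower (β : ℝ) (hβ : -1 < β) (δ : ℝ) (hδ : 0 < δ) (hδ1 : δ ≤ 1) (Θ : Set ℝ)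
    (hΘ : Θ ⊆ Ioo (-Real.pi) Real.pi)
    (S : Set ℂ) (hS : MeasurableSet S)
    (h : ∀ r ∈ Ioo (1 - δ) 1, ∀ θ ∈ Θ, pol r θ ∈ S) :
    ENNReal.ofReal (δ ^ (β + 1) / (2 * Real.pi)) * volume Θ ≤ Abeta β S := by
  have h1 : Abeta β S = ∫⁻ z, S.indicator 1 z ∂(Abeta β) := by
    rw [lintegral_indicator_one hS]
  have hmT : MeasurableSet ((fun p : ℝ × ℝ => pol p.1 p.2) ⁻¹' S) := continuous_pol.measurable hS
  have h2 : ∀ p : ℝ × ℝ, wt β p.1 * S.indicator 1 (pol p.1 p.2) =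
      ((fun p : ℝ × ℝ => pol p.1 p.2) ⁻¹' S).indicator (fun p : ℝ × ℝ => wt β p.1) p := by
    intro p
    by_cases hp : pol p.1 p.2 ∈ S
    · rw [indicator_of_mem hp, indicator_of_mem (by exact hp)]; simp
    · rw [indicator_of_notMem hp, indicator_of_notMem (by exact hp)]; simp
  rw [h1, lint_polar β hβ _ (measurable_one.indicator hS)]
  simp only [h2]
  rw [lintegral_indicator hmT, Measure.restrict_restrict hmT]
  calc _ ≤ ENNReal.ofReal ((2 * δ - δ ^ 2) ^ (β + 1) / (2 * Real.pi)) * volume Θ := by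
        gcongr
        · linarith
        · nlinarith
    _ = _ := (Abeta_rect β hβ δ hδ hδ1 Θ).symm
    _ ≤ _ := by
      apply lintegral_mono_set
      rintro ⟨r, θ⟩ ⟨hp1, hp2⟩
      exact ⟨h r hp1 θ hp2, ⟨by simp only; linarith [hp1.1], hp1.2⟩, hΘ hp2⟩

theorem Abeta_univ_lt (β : ℝ) (hβ : -1 < β) : Abeta β univ < ∞ := by
  refine lt_of_le_of_lt (Abeta_upper β hβ 1 one_pos le_rfl (Ioo (-Real.pi) Real.pi) univ
    MeasurableSet.univ (fun r hr θ hθ _ => ⟨by simpa using hr.1, hθ⟩)) ?_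
  rw [Real.volume_Ioo]
  exact ENNReal.mul_lt_top ENNReal.ofReal_lt_top ENNReal.ofReal_lt_top

theorem Vbeta_univ_lt (n : ℕ) (β : ℝ) (hβ : -1 < β) : Vbeta n β univ < ∞ := by
  rw [Vbeta_eq n β hβ, Measure.pi_univ]
  exact ENNReal.prod_lt_top (fun _ _ => Abeta_univ_lt β hβ)

theorem Abeta_univ_pos (β : ℝ) (hβ : -1 < β) : 0 < Abeta β univ := by
  refine lt_of_lt_of_le ?_ (Abeta_lower β hβ 1 one_pos le_rfl (Ioo (-Real.pi) Real.pi) le_rfl univ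
    MeasurableSet.univ (fun r hr θ hθ => mem_univ _))
  rw [Real.volume_Ioo, ← ENNReal.ofReal_mul (by positivity), ENNReal.ofReal_pos]
  have := Real.pi_pos
  rw [sub_neg_eq_add]
  positivity


theorem vol_periodic (P : Set ℝ) (hP : MeasurableSet P)
    (hper : ∀ x, x + 2 * Real.pi ∈ P ↔ x ∈ P) (n : ℕ) (hn : 1 ≤ n) :
    volume ({θ : ℝ | n * θ ∈ P} ∩ Ioc (-Real.pi) Real.pi) = volume (P ∩ Ioc (-Real.pi) Real.pi) := by
  have hpi := Real.pi_pos
  set f : ℝ → ℝ := P.indicator 1 with hf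
  have hfper : Function.Periodic f (2 * Real.pi) := by
    intro x
    by_cases h : x ∈ P
    · rw [hf, indicator_of_mem h, indicator_of_mem ((hper x).2 h)]; rfl
    · rw [hf, indicator_of_notMem h, indicator_of_notMem (fun h' => h ((hper x).1 h'))]
  have hfi : ∀ a b : ℝ, IntervalIntegrable f volume a b := by
    intro a b
    rw [intervalIntegrable_iff]
    apply IntegrableOn.indicator _ hP
    exact integrableOn_const (by simp)
  have key : ∀ Q : Set ℝ, MeasurableSet Q →
      ∫ x in (-Real.pi)..Real.pi, Q.indicator (1 : ℝ → ℝ) x = (volume (Q ∩ Ioc (-Real.pi) Real.pi)).toReal := by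
    intro Q hQ
    rw [intervalIntegral.integral_of_le (by linarith), integral_indicator_one hQ]
    rw [measureReal_def, Measure.restrict_apply hQ]
  have hQm : MeasurableSet {θ : ℝ | (n:ℝ) * θ ∈ P} := by
    have : Measurable (fun θ : ℝ => (n:ℝ) * θ) := by fun_prop
    exact this hP
  have h1 := key _ hQm
  have h2 := key _ hP
  have hn0 : (n:ℝ) ≠ 0 := by positivity
  have h3 : ∫ x in (-Real.pi)..Real.pi, ({θ : ℝ | (n:ℝ) * θ ∈ P}).indicator (1 : ℝ → ℝ) x =
      ∫ x in (-Real.pi)..Real.pi, f (n * x) := by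
    rfl
  rw [h3, intervalIntegral.integral_comp_mul_left f hn0] at h1
  have h4 := hfper.intervalIntegral_add_zsmul_eq (n:ℤ) ((n:ℝ) * (-Real.pi)) hfi
  rw [hfper.intervalIntegral_add_eq _ (-Real.pi)] at h4
  have e1 : (n:ℝ) * (-Real.pi) + (n:ℤ) • (2 * Real.pi) = n * Real.pi := by
    rw [zsmul_eq_mul]; push_cast; ring
  have e2 : -Real.pi + 2 * Real.pi = Real.pi := by ring
  rw [e1, e2, h2] at h4
  rw [h4] at h1
  have h5 : (volume ({θ : ℝ | n * θ ∈ P} ∩ Ioc (-Real.pi) Real.pi)).toReal =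
    (volume (P ∩ Ioc (-Real.pi) Real.pi)).toReal := by
    rw [← h1, zsmul_eq_mul, smul_eq_mul]
    push_cast
    field_simp
  have hfin : ∀ Q : Set ℝ, volume (Q ∩ Ioc (-Real.pi) Real.pi) ≠ ∞ := by
    intro Q
    apply ne_top_of_le_ne_top _ (measure_mono inter_subset_right)
    simp
  exact (ENNReal.toReal_eq_toReal_iff' (hfin _) (hfin _)).1 h5

theorem vol_cos (δ : ℝ) (hδ : 0 < δ) :
    volume ({x : ℝ | 1 - δ < Real.cos x} ∩ Ioc (-Real.pi) Real.pi) ≤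
      ENNReal.ofReal (2 * Real.pi * Real.sqrt δ) := by
  have hpi := Real.pi_pos
  calc _ ≤ volume (Icc (-(Real.pi * Real.sqrt δ)) (Real.pi * Real.sqrt δ)) := by
        apply measure_mono
        rintro x ⟨h1, h2, h3⟩
        have h4 := Real.cos_le_one_sub_mul_cos_sq (x := x) (abs_le.2 ⟨h2.le, h3⟩)
        have h5 : 2 / Real.pi ^ 2 * x ^ 2 < δ := by
          have : 1 - δ < Real.cos x := h1
          linarith
        have h6 : x ^ 2 ≤ (Real.pi * Real.sqrt δ) ^ 2 := by
          rw [mul_pow, Real.sq_sqrt hδ.le]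
          rw [div_mul_eq_mul_div, div_lt_iff₀ (by positivity)] at h5
          nlinarith [sq_nonneg x]
        exact abs_le.1 (abs_le_of_sq_le_sq h6 (by positivity))
    _ = _ := by rw [Real.volume_Icc]; congr 1; ring

theorem vol_sin (δ κ s : ℝ) (hδ : 0 < δ) (hδ1 : δ ≤ 1/2) (hκ : 0 < κ) :
    volume ({x : ℝ | 1 - δ < Real.cos x ∧ |Real.sin x - s| < κ} ∩ Ioc (-Real.pi) Real.pi) ≤
      ENNReal.ofReal (8 * κ) := by
  have hpi := Real.pi_pos
  rcases eq_empty_or_nonempty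
    ({x : ℝ | 1 - δ < Real.cos x ∧ |Real.sin x - s| < κ} ∩ Ioc (-Real.pi) Real.pi) with he | ⟨x0, hx0⟩
  · rw [he]; simp
  have hD : ∀ x, 1 - δ < Real.cos x → x ∈ Ioc (-Real.pi) Real.pi →
      x ∈ Icc (-(Real.pi/3)) (Real.pi/3) := by
    intro x h1 h2
    have hc : Real.cos (Real.pi/3) < Real.cos |x| := by
      rw [Real.cos_pi_div_three, Real.cos_abs]; linarith
    have hx : |x| ≤ Real.pi := abs_le.2 ⟨h2.1.le, h2.2⟩
    have : |x| < Real.pi / 3 := by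
      by_contra hcon
      push Not at hcon
      have := Real.cos_le_cos_of_nonneg_of_le_pi (by positivity) hx hcon
      linarith
    exact abs_le.1 this.le
  have hmv : ∀ x ∈ Icc (-(Real.pi/3)) (Real.pi/3), ∀ y ∈ Icc (-(Real.pi/3)) (Real.pi/3), x ≤ y →
      1/2 * (y - x) ≤ Real.sin y - Real.sin x := by
    apply Convex.mul_sub_le_image_sub_of_le_deriv (convex_Icc _ _) Real.continuous_sin.continuousOn
      Real.differentiable_sin.differentiableOn
    intro x hx
    rw [interior_Icc] at hx
    rw [Real.deriv_sin, ← Real.cos_abs, ← Real.cos_pi_div_three]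
    apply Real.cos_le_cos_of_nonneg_of_le_pi (abs_nonneg _) (by linarith)
    exact abs_le.2 ⟨hx.1.le, hx.2.le⟩
  calc _ ≤ volume (Icc (x0 - 4 * κ) (x0 + 4 * κ)) := by
        apply measure_mono
        rintro x ⟨⟨h1, h2⟩, h3⟩
        obtain ⟨⟨g1, g2⟩, g3⟩ := hx0
        rw [abs_lt] at h2 g2
        have hx := hD x h1 h3
        have hy := hD x0 g1 g3
        rcases le_total x x0 with h | h
        · have := hmv x hx x0 hy h
          constructor <;> linarith
        · have := hmv x0 hy x hx h
          constructor <;> linarith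
    _ = _ := by rw [Real.volume_Icc]; congr 1; ring

theorem pol_pow (r θ : ℝ) (n : ℕ) : pol r θ ^ n = pol (r ^ n) (n * θ) := by
  unfold pol
  rw [mul_pow, ← Complex.exp_nat_mul]
  push_cast
  ring_nf

theorem pol_re (r θ : ℝ) : (pol r θ).re = r * Real.cos θ := by
  unfold pol
  rw [Complex.re_ofReal_mul, Complex.exp_ofReal_mul_I_re]

theorem pol_im (r θ : ℝ) : (pol r θ).im = r * Real.sin θ := by
  unfold pol
  rw [Complex.im_ofReal_mul, Complex.exp_ofReal_mul_I_im]

theorem polar_cond (n : ℕ) (hn : 1 ≤ n) (δ : ℝ) (hδ1 : δ ≤ 1) (r θ : ℝ)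
    (hr : r ∈ Ioo (0:ℝ) 1) (h : 1 - δ < (pol r θ ^ n).re) :
    1 - δ < r ^ n ∧ 1 - δ < r ∧ 1 - δ < Real.cos (n * θ) := by
  rw [pol_pow, pol_re] at h
  have h1 : 0 < r ^ n := pow_pos hr.1 n
  have h2 : r ^ n ≤ r := pow_le_of_le_one hr.1.le hr.2.le (by omega)
  have h3 := Real.cos_le_one (n * θ)
  have h4 : 0 < Real.cos (n * θ) := by
    by_contra hc
    push Not at hc
    nlinarith
  refine ⟨by nlinarith, by nlinarith, by nlinarith [hr.2]⟩

theorem Abeta_S1 (β : ℝ) (hβ : -1 < β) (n : ℕ) (hn : 1 ≤ n) (δ : ℝ) (hδ : 0 < δ) (hδ1 : δ ≤ 1/2) :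
    Abeta β {z | 1 - δ < (z ^ n).re} ≤
      ENNReal.ofReal ((2 * δ) ^ (β + 1)) * ENNReal.ofReal (2 * Real.pi * Real.sqrt δ) := by
  have hP : MeasurableSet {x : ℝ | 1 - δ < Real.cos x} :=
    measurableSet_lt measurable_const Real.measurable_cos
  refine le_trans (Abeta_upper β hβ δ hδ (by linarith)
    ({θ : ℝ | n * θ ∈ {x : ℝ | 1 - δ < Real.cos x}} ∩ Ioc (-Real.pi) Real.pi) _ ?_ ?_) ?_
  · apply measurableSet_lt measurable_const
    fun_prop
  · intro r hr θ hθ hz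
    obtain ⟨_, h2, h3⟩ := polar_cond n hn δ (by linarith) r θ hr hz
    exact ⟨h2, h3, Ioo_subset_Ioc_self hθ⟩
  · rw [vol_periodic _ hP (fun x => by simp) n hn]
    gcongr
    exact vol_cos δ hδ

theorem Abeta_S2 (β : ℝ) (hβ : -1 < β) (n : ℕ) (hn : 1 ≤ n) (δ κ s : ℝ) (hδ : 0 < δ) (hδ1 : δ ≤ 1/2)
    (hκ : 0 < κ) :
    Abeta β {z | 1 - δ < (z ^ n).re ∧ |(z ^ n).im - s| < κ * δ} ≤
      ENNReal.ofReal ((2 * δ) ^ (β + 1)) * ENNReal.ofReal (8 * ((κ + 1) * δ)) := by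
  have hP : MeasurableSet {x : ℝ | 1 - δ < Real.cos x ∧ |Real.sin x - s| < (κ + 1) * δ} := by
    simp only [ofPred_and]
    refine (measurableSet_lt measurable_const Real.measurable_cos).inter ?_
    apply measurableSet_lt _ measurable_const
    fun_prop
  refine le_trans (Abeta_upper β hβ δ hδ (by linarith)
    ({θ : ℝ | n * θ ∈ {x : ℝ | 1 - δ < Real.cos x ∧ |Real.sin x - s| < (κ + 1) * δ}} ∩ Ioc (-Real.pi) Real.pi) _ ?_ ?_) ?_
  · simp only [ofPred_and]
    apply MeasurableSet.inter
    · apply measurableSet_lt measurable_const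
      fun_prop
    · apply measurableSet_lt _ measurable_const
      fun_prop
  · rintro r hr θ hθ ⟨hz, hz2⟩
    obtain ⟨h1, h2, h3⟩ := polar_cond n hn δ (by linarith) r θ hr hz
    refine ⟨h2, ⟨h3, ?_⟩, Ioo_subset_Ioc_self hθ⟩
    rw [pol_pow, pol_im] at hz2
    have h4 := Real.sin_le_one (n * θ)
    have h5 := Real.neg_one_le_sin (n * θ)
    have h6 : r ^ n < 1 := pow_lt_one₀ hr.1.le hr.2 (by omega)
    rw [abs_lt] at hz2 ⊢
    constructor <;> nlinarith
  · rw [vol_periodic _ hP (fun x => by simp) n hn]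
    gcongr
    exact vol_sin δ _ s hδ hδ1 (by positivity)


theorem rpow_split (h β : ℝ) (hh : 0 < h) (k : ℕ) :
    h ^ (((k:ℝ) + 1) * (β + 1) + ((k:ℝ) + 2) / 2) =
      (h ^ (β + 1) * h) * (h ^ (β + 1) * Real.sqrt h) ^ k := by
  rw [Real.sqrt_eq_rpow, ← Real.rpow_add hh, ← Real.rpow_natCast, ← Real.rpow_mul hh.le]
  nth_rewrite 3 [← Real.rpow_one h]
  rw [← Real.rpow_add hh, ← Real.rpow_add hh]
  congr 1
  ring

theorem exists_min (n : ℕ) (a : Fin n → ℝ) (ha : ∀ j, 0 < a j) :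
    ∃ m, 0 < m ∧ m ≤ 1 ∧ ∀ j, m ≤ a j := by
  induction n with
  | zero => exact ⟨1, one_pos, le_rfl, fun j => j.elim0⟩
  | succ n ih =>
    obtain ⟨m, h1, h2, h3⟩ := ih (fun j => a j.succ) (fun j => ha _)
    refine ⟨min m (a 0), lt_min h1 (ha 0), (min_le_left _ _).trans h2, fun j => ?_⟩
    refine Fin.cases ?_ (fun i => ?_) j
    · exact min_le_right _ _
    · exact (min_le_left _ _).trans (h3 i)

theorem V_upper_small (k N : ℕ) (hN : 1 ≤ N) (a : Fin (k+1) → ℝ) (ha : ∀ j, 0 < a j)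
    (hsum : ∑ j, a j = 1) (β : ℝ) (hβ : -1 < β) (m : ℝ) (hm : 0 < m) (hma : ∀ j, m ≤ a j)
    (h : ℝ) (hh : 0 < h) (hhm : h ≤ m / 4) :
    Vbeta (k+1) β {z | z ∈ polydisc (k+1) ∧ ‖∑ j, (a j : ℂ) * z j ^ N - ((1 - h : ℝ) : ℂ)‖ < h} ≤
      (ENNReal.ofReal ((2 * (2 / m * h)) ^ (β + 1)) * ENNReal.ofReal (8 * ((1 + 1) * (2 / m * h)))) *
      (ENNReal.ofReal ((2 * (2 / m * h)) ^ (β + 1)) *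
        ENNReal.ofReal (2 * Real.pi * Real.sqrt (2 / m * h))) ^ k := by
  set δ := 2 / m * h with hδ
  have hδ0 : 0 < δ := by positivity
  have hδ1 : δ ≤ 1/2 := by
    rw [hδ, div_mul_eq_mul_div, div_le_iff₀ hm]; linarith
  set B1 := ENNReal.ofReal ((2 * δ) ^ (β + 1)) * ENNReal.ofReal (2 * Real.pi * Real.sqrt δ) with hB1
  set B2 := ENNReal.ofReal ((2 * δ) ^ (β + 1)) * ENNReal.ofReal (8 * ((1 + 1) * δ)) with hB2
  let s : (Fin k → ℂ) → ℝ := fun y => -(∑ j, a j.succ * (y j ^ N).im) / a 0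
  let G : Set (ℂ × (Fin k → ℂ)) := {p | (∀ j, 1 - δ < ((p.2 j) ^ N).re) ∧
    (1 - δ < (p.1 ^ N).re ∧ |(p.1 ^ N).im - s p.2| < 1 * δ)}
  have hs : Measurable s := by
    simp only [s]
    fun_prop
  have hGm : MeasurableSet G := by
    simp only [G, ofPred_and, ofPred_forall]
    apply MeasurableSet.inter
    · apply MeasurableSet.iInter
      intro j
      apply measurableSet_lt measurable_const
      fun_prop
    · apply MeasurableSet.inter
      · apply measurableSet_lt measurable_const
        fun_prop
      · apply measurableSet_lt _ measurable_const
        fun_prop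
  rw [Vbeta_eq _ β hβ]
  have hmp := measurePreserving_piFinSuccAbove (fun _ : Fin (k+1) => Abeta β) 0
  have hsub : {z | z ∈ polydisc (k+1) ∧ ‖∑ j, (a j : ℂ) * z j ^ N - ((1 - h : ℝ) : ℂ)‖ < h} ⊆
      (MeasurableEquiv.piFinSuccAbove (fun _ : Fin (k+1) => ℂ) 0) ⁻¹' G := by
    rintro z ⟨hz, hz2⟩
    have hre := (abs_lt.1 ((Complex.abs_re_le_norm _).trans_lt hz2)).1
    have him := (Complex.abs_im_le_norm _).trans_lt hz2
    simp only [Complex.sub_re, Complex.re_sum, Complex.re_ofReal_mul, Complex.ofReal_re] at hre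
    simp only [Complex.sub_im, Complex.im_sum, Complex.im_ofReal_mul, Complex.ofReal_im, sub_zero] at him
    have hle : ∀ j, (z j ^ N).re ≤ 1 := by
      intro j
      calc (z j ^ N).re ≤ ‖z j ^ N‖ := Complex.re_le_norm _
        _ = ‖z j‖ ^ N := norm_pow _ _
        _ ≤ 1 := pow_le_one₀ (norm_nonneg _) (hz j).le
    have hterm : ∀ j, 1 - δ < (z j ^ N).re := by
      intro j
      have h1 : a j * (1 - (z j ^ N).re) ≤ ∑ i, a i * (1 - (z i ^ N).re) :=
        Finset.single_le_sum (f := fun i => a i * (1 - (z i ^ N).re))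
          (fun i _ => mul_nonneg (ha i).le (by linarith [hle i])) (Finset.mem_univ j)
      have h2 : ∑ i, a i * (1 - (z i ^ N).re) = 1 - ∑ i, a i * (z i ^ N).re := by
        simp only [mul_sub, mul_one, Finset.sum_sub_distrib, hsum]
      have h3 : m * (1 - (z j ^ N).re) ≤ a j * (1 - (z j ^ N).re) :=
        mul_le_mul_of_nonneg_right (hma j) (by linarith [hle j])
      have h4 : m * (1 - (z j ^ N).re) < m * δ := by
        have : m * δ = 2 * h := by rw [hδ]; field_simp
        rw [this]; linarith
      linarith [lt_of_mul_lt_mul_left h4 hm.le]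
    have hp1 : ((MeasurableEquiv.piFinSuccAbove (fun _ : Fin (k+1) => ℂ) 0) z).1 = z 0 := rfl
    have hp2 : ∀ j, ((MeasurableEquiv.piFinSuccAbove (fun _ : Fin (k+1) => ℂ) 0) z).2 j = z j.succ :=
      fun j => rfl
    refine ⟨fun j => ?_, ?_, ?_⟩
    · rw [hp2]; exact hterm _
    · rw [hp1]; exact hterm _
    · simp only [s, hp1, hp2]
      rw [Fin.sum_univ_succ] at him
      have ha0 := ha 0
      have e : (z 0 ^ N).im - -(∑ j : Fin k, a j.succ * (z j.succ ^ N).im) / a 0 =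
          (a 0 * (z 0 ^ N).im + ∑ j : Fin k, a j.succ * (z j.succ ^ N).im) / a 0 := by
        field_simp; ring
      rw [e, abs_div, abs_of_pos ha0, div_lt_iff₀ ha0]
      refine him.trans_le ?_
      have : m * δ = 2 * h := by rw [hδ]; field_simp
      nlinarith [hma 0]
  refine (measure_mono hsub).trans ?_
  rw [hmp.measure_preimage hGm.nullMeasurableSet, Measure.prod_apply_symm hGm]
  calc _ ≤ ∫⁻ y, (univ.pi (fun _ : Fin k => {z : ℂ | 1 - δ < (z ^ N).re})).indicator (fun _ => B2) y
        ∂(Measure.pi (fun _ : Fin k => Abeta β)) := by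
        apply lintegral_mono
        intro y
        by_cases hy : ∀ j, 1 - δ < ((y j) ^ N).re
        · rw [indicator_of_mem (by intro j _; exact hy j)]
          refine (measure_mono ?_).trans (Abeta_S2 β hβ N hN δ 1 (s y) hδ0 hδ1 one_pos)
          intro x hx
          exact hx.2
        · have : (fun x => (x, y)) ⁻¹' G = ∅ := by
            ext x
            simp only [mem_preimage, mem_empty_iff_false, iff_false]
            exact fun hx => hy hx.1
          show (Abeta β) ((fun x => (x, y)) ⁻¹' G) ≤ _
          rw [this]; simp
    _ ≤ B2 * ∏ j : Fin k, Abeta β {z : ℂ | 1 - δ < (z ^ N).re} := by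
        refine (lintegral_indicator_const_le _ _).trans ?_
        rw [Measure.pi_pi]
    _ ≤ B2 * B1 ^ k := by
        gcongr
        calc _ ≤ ∏ j : Fin k, B1 := Finset.prod_le_prod' (fun j _ => Abeta_S1 β hβ N hN δ hδ0 hδ1)
          _ = _ := by simp

theorem V_upper (k N : ℕ) (hN : 1 ≤ N) (a : Fin (k+1) → ℝ) (ha : ∀ j, 0 < a j)
    (hsum : ∑ j, a j = 1) (β : ℝ) (hβ : -1 < β) :
    ∃ C : ℝ, 0 ≤ C ∧ ∀ h : ℝ, 0 < h → h ≤ 1 →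
    Vbeta (k+1) β {z | z ∈ polydisc (k+1) ∧ ‖∑ j, (a j : ℂ) * z j ^ N - ((1 - h : ℝ) : ℂ)‖ < h} ≤
      ENNReal.ofReal (C * h ^ (((k:ℝ) + 1) * (β + 1) + ((k:ℝ) + 2) / 2)) := by
  obtain ⟨m, hm, hm1, hma⟩ := exists_min _ a ha
  set M := ((k:ℝ) + 1) * (β + 1) + ((k:ℝ) + 2) / 2 with hM
  have hb1 : 0 < β + 1 := by linarith
  have hM0 : 0 ≤ M := by positivity
  have hpi := Real.pi_pos
  set C1 : ℝ := ((2 * (2 / m)) ^ (β + 1) * (8 * ((1 + 1) * (2 / m)))) *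
    ((2 * (2 / m)) ^ (β + 1) * (2 * Real.pi * Real.sqrt (2 / m))) ^ k with hC1
  set T := (Vbeta (k+1) β univ).toReal with hT
  have hC10 : 0 ≤ C1 := by positivity
  have hT0 : 0 ≤ T := ENNReal.toReal_nonneg
  refine ⟨C1 + T / (m/4) ^ M, by positivity, fun h hh hh1 => ?_⟩
  by_cases hc : h ≤ m / 4
  · refine (V_upper_small k N hN a ha hsum β hβ m hm hma h hh hc).trans ?_
    rw [← ENNReal.ofReal_mul (by positivity), ← ENNReal.ofReal_mul (by positivity),
      ← ENNReal.ofReal_pow (by positivity), ← ENNReal.ofReal_mul (by positivity)]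
    apply ENNReal.ofReal_le_ofReal
    have e : (2 * (2 / m * h)) ^ (β + 1) * (8 * ((1 + 1) * (2 / m * h))) *
      ((2 * (2 / m * h)) ^ (β + 1) * (2 * Real.pi * Real.sqrt (2 / m * h))) ^ k = C1 * h ^ M := by
      rw [hM, rpow_split h β hh k, hC1, ← mul_assoc 2 (2/m) h, Real.mul_rpow (by positivity) hh.le,
        Real.sqrt_mul (by positivity)]
      simp only [mul_pow]
      ring
    rw [e]
    have : 0 ≤ T / (m/4) ^ M * h ^ M := by positivity
    nlinarith
  · push Not at hc
    refine (measure_mono (subset_univ _)).trans ?_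
    rw [← ENNReal.ofReal_toReal (Vbeta_univ_lt (k+1) β hβ).ne, ← hT]
    apply ENNReal.ofReal_le_ofReal
    have h1 : (m/4) ^ M ≤ h ^ M := Real.rpow_le_rpow (by positivity) hc.le hM0
    have h2 : 0 < (m/4) ^ M := by positivity
    have h3 : T ≤ T / (m/4) ^ M * h ^ M := by
      rw [div_mul_eq_mul_div, le_div_iff₀ h2]
      exact mul_le_mul_of_nonneg_left h1 hT0
    have h4 : 0 ≤ C1 * h ^ M := by positivity
    linarith


theorem arg_pol (r θ : ℝ) (hr : 0 < r) (h1 : -Real.pi < θ) (h2 : θ ≤ Real.pi) :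
    (pol r θ).arg = θ := by
  unfold pol
  rw [Complex.arg_real_mul _ hr, Complex.arg_exp_mul_I, toIocMod_eq_self]
  constructor
  · exact h1
  · linarith

theorem pol_self (z : ℂ) : pol ‖z‖ z.arg = z := Complex.norm_mul_exp_arg_mul_I z

theorem lower_est (n N : ℕ) (a r θ : Fin n → ℝ) (ha : ∀ j, 0 < a j) (hsum : ∑ j, a j = 1)
    (h L : ℝ) (hh : 0 < h) (hr0 : ∀ j, 0 ≤ r j) (hr : ∀ j, 1 - h < r j) (hr1 : ∀ j, r j < 1)
    (hθ : ∀ j, |θ j| ≤ L * Real.sqrt h) (hNL : N * (L * Real.sqrt h) ≤ 1)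
    (hs : |∑ j, a j * θ j| ≤ h) :
    ‖1 - ∑ j, (a j : ℂ) * (pol (r j) (θ j)) ^ N‖ ≤ (2 * N + N ^ 2 * L ^ 2) * h := by
  have e : 1 - ∑ j, (a j : ℂ) * (pol (r j) (θ j)) ^ N =
      ∑ j, (a j : ℂ) * ((((1 - r j ^ N : ℝ) : ℂ)) * Complex.exp ((N * θ j : ℝ) * Complex.I)
        - (Complex.exp ((N * θ j : ℝ) * Complex.I) - 1 - (N * θ j : ℝ) * Complex.I))
      - (N : ℂ) * ((∑ j, a j * θ j : ℝ) : ℂ) * Complex.I := by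
    have h1 : (1 : ℂ) = ∑ j, (a j : ℂ) := by rw [← Complex.ofReal_sum, hsum]; simp
    nth_rewrite 1 [h1]
    rw [Complex.ofReal_sum, Finset.mul_sum, Finset.sum_mul, ← Finset.sum_sub_distrib,
      ← Finset.sum_sub_distrib]
    apply Finset.sum_congr rfl
    intro j _
    rw [pol_pow, pol]
    push_cast
    ring
  rw [e]
  have hb : ∀ j, ‖(a j : ℂ) * ((((1 - r j ^ N : ℝ) : ℂ)) * Complex.exp ((N * θ j : ℝ) * Complex.I)
        - (Complex.exp ((N * θ j : ℝ) * Complex.I) - 1 - (N * θ j : ℝ) * Complex.I))‖ ≤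
        a j * ((N + N ^ 2 * L ^ 2) * h) := by
    intro j
    rw [norm_mul, Complex.norm_real, Real.norm_of_nonneg (ha j).le]
    apply mul_le_mul_of_nonneg_left _ (ha j).le
    have hrN : r j ^ N ≤ 1 := pow_le_one₀ (hr0 j) (hr1 j).le
    have h1 : ‖(((1 - r j ^ N : ℝ) : ℂ)) * Complex.exp ((N * θ j : ℝ) * Complex.I)‖ ≤ N * h := by
      rw [norm_mul, Complex.norm_exp_ofReal_mul_I, mul_one, Complex.norm_real,
        Real.norm_of_nonneg (by linarith)]
      have := one_add_mul_le_pow (a := r j - 1) (by linarith [hr0 j]) N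
      rw [add_sub_cancel] at this
      have h2 : (N:ℝ) * (1 - r j) ≤ N * h := by
        apply mul_le_mul_of_nonneg_left _ (by positivity)
        linarith [hr j]
      nlinarith
    have hx : ‖((N * θ j : ℝ) : ℂ) * Complex.I‖ ≤ N * (L * Real.sqrt h) := by
      rw [norm_mul, Complex.norm_I, mul_one, Complex.norm_real, Real.norm_eq_abs, abs_mul, Nat.abs_cast]
      exact mul_le_mul_of_nonneg_left (hθ j) (by positivity)
    have h2 := Complex.norm_exp_sub_one_sub_id_le (hx.trans hNL)
    have h3 : ‖((N * θ j : ℝ) : ℂ) * Complex.I‖ ^ 2 ≤ N ^ 2 * L ^ 2 * h := by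
      calc _ ≤ (N * (L * Real.sqrt h)) ^ 2 := by gcongr
        _ = _ := by rw [mul_pow, mul_pow, Real.sq_sqrt hh.le]; ring
    calc _ ≤ _ := norm_sub_le _ _
      _ ≤ N * h + N ^ 2 * L ^ 2 * h := add_le_add h1 (h2.trans h3)
      _ = _ := by ring
  calc _ ≤ _ := norm_sub_le _ _
    _ ≤ ∑ j, a j * ((N + N ^ 2 * L ^ 2) * h) + N * h := by
      apply add_le_add
      · exact (norm_sum_le _ _).trans (Finset.sum_le_sum (fun j _ => hb j))
      · rw [norm_mul, norm_mul, Complex.norm_I, mul_one, Complex.norm_natCast, Complex.norm_real]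
        exact mul_le_mul_of_nonneg_left hs (by positivity)
    _ = _ := by rw [← Finset.sum_mul, hsum]; ring

theorem V_lower (k N : ℕ) (hN : 1 ≤ N) (a : Fin (k+1) → ℝ) (ha : ∀ j, 0 < a j)
    (hsum : ∑ j, a j = 1) (β : ℝ) (hβ : -1 < β) :
    ∃ c K h1 : ℝ, 0 < c ∧ 0 < K ∧ 0 < h1 ∧ h1 ≤ 1 ∧ ∀ h : ℝ, 0 < h → h < h1 →
      ENNReal.ofReal (c * h ^ (((k:ℝ) + 1) * (β + 1) + ((k:ℝ) + 2) / 2)) ≤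
      Vbeta (k+1) β {z | ‖1 - ∑ j, (a j : ℂ) * z j ^ N‖ ≤ K * h} := by
  obtain ⟨m, hm, hm1, hma⟩ := exists_min _ a ha
  have hpi := Real.pi_gt_three
  set L : ℝ := 1 / m + 1 with hL
  have hm2 : 1 ≤ 1 / m := by rw [le_div_iff₀ hm]; linarith
  have hL1 : 1 ≤ L := by linarith
  have hN1 : (1:ℝ) ≤ N := by exact_mod_cast hN
  have hNL1 : 1 ≤ (N * L) ^ 2 := by
    apply one_le_pow₀
    nlinarith
  refine ⟨(1 / Real.pi) * (1 / Real.pi) ^ k, 2 * N + N ^ 2 * L ^ 2, 1 / (N * L) ^ 2,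
    by positivity, by positivity, by positivity, ?_, ?_⟩
  · rw [div_le_iff₀ (by positivity)]; linarith
  intro h hh hh1
  have hNL : N * (L * Real.sqrt h) ≤ 1 := by
    have : (N * (L * Real.sqrt h)) ^ 2 ≤ 1 ^ 2 := by
      rw [← mul_assoc, mul_pow, Real.sq_sqrt hh.le]
      rw [lt_div_iff₀ (by positivity)] at hh1
      linarith
    exact (abs_le_of_sq_le_sq' this (by norm_num)).2
  have hsq0 : 0 < Real.sqrt h := Real.sqrt_pos.2 hh
  have hLs : L * Real.sqrt h ≤ 1 := by nlinarith [mul_pos (by linarith : 0 < L) hsq0]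
  have hs1 : Real.sqrt h ≤ 1 := by nlinarith
  have hhs : h ≤ Real.sqrt h := by nlinarith [Real.sq_sqrt hh.le]
  have hh2 : h ≤ 1 := hhs.trans hs1
  set K := 2 * (N:ℝ) + N ^ 2 * L ^ 2
  let G : Set (ℂ × (Fin k → ℂ)) :=
    {p | ‖1 - ((a 0 : ℂ) * p.1 ^ N + ∑ j : Fin k, (a j.succ : ℂ) * p.2 j ^ N)‖ ≤ K * h}
  have hGm : MeasurableSet G := by
    apply measurableSet_le _ measurable_const
    fun_prop
  rw [Vbeta_eq _ β hβ]
  have hmp := measurePreserving_piFinSuccAbove (fun _ : Fin (k+1) => Abeta β) 0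
  have hpre : {z | ‖1 - ∑ j, (a j : ℂ) * z j ^ N‖ ≤ K * h} =
      (MeasurableEquiv.piFinSuccAbove (fun _ : Fin (k+1) => ℂ) 0) ⁻¹' G := by
    ext z
    have hp1 : ((MeasurableEquiv.piFinSuccAbove (fun _ : Fin (k+1) => ℂ) 0) z).1 = z 0 := rfl
    have hp2 : ∀ j, ((MeasurableEquiv.piFinSuccAbove (fun _ : Fin (k+1) => ℂ) 0) z).2 j = z j.succ :=
      fun j => rfl
    simp only [G, mem_preimage, mem_ofPred_eq, Fin.sum_univ_succ, hp1, hp2]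
  rw [hpre, hmp.measure_preimage hGm.nullMeasurableSet, Measure.prod_apply_symm hGm]
  set S : Set ℂ := {z | 1 - h < ‖z‖ ∧ ‖z‖ < 1 ∧ |z.arg| < Real.sqrt h} with hS
  have hSm : MeasurableSet S := by
    simp only [hS, ofPred_and]
    apply MeasurableSet.inter
    · exact measurableSet_lt measurable_const measurable_norm
    apply MeasurableSet.inter
    · exact measurableSet_lt measurable_norm measurable_const
    · apply measurableSet_lt _ measurable_const
      exact (Complex.measurable_arg).abs
  set B := ENNReal.ofReal (h ^ (β + 1) / (2 * Real.pi)) * ENNReal.ofReal (2 * h) with hB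
  set B' := ENNReal.ofReal (h ^ (β + 1) / (2 * Real.pi)) * ENNReal.ofReal (2 * Real.sqrt h) with hB'
  have hAS : B' ≤ Abeta β S := by
    have := Abeta_lower β hβ h hh hh2 (Ioo (-Real.sqrt h) (Real.sqrt h))
      (Ioo_subset_Ioo (by linarith) (by linarith)) S hSm ?_
    · rw [Real.volume_Ioo, show Real.sqrt h - -Real.sqrt h = 2 * Real.sqrt h by ring] at this
      exact this
    · intro r hr θ hθ
      have hr0 : 0 < r := by linarith [hr.1]
      refine ⟨?_, ?_, ?_⟩
      · rw [norm_pol r θ hr0.le]; exact hr.1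
      · rw [norm_pol r θ hr0.le]; exact hr.2
      · rw [arg_pol r θ hr0 (by linarith [hθ.1]) (by linarith [hθ.2])]
        exact abs_lt.2 hθ
  calc _ ≤ B * B' ^ k := by
        rw [hB, hB', ← ENNReal.ofReal_mul (by positivity), ← ENNReal.ofReal_mul (by positivity),
          ← ENNReal.ofReal_pow (by positivity), ← ENNReal.ofReal_mul (by positivity)]
        apply ENNReal.ofReal_le_ofReal
        rw [rpow_split h β hh k]
        apply le_of_eq
        have : h ^ (β + 1) / (2 * Real.pi) * (2 * Real.sqrt h) =
          (1 / Real.pi) * (h ^ (β + 1) * Real.sqrt h) := by field_simp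
        rw [this, mul_pow (1 / Real.pi)]
        field_simp
    _ ≤ B * ∏ j : Fin k, Abeta β S := by
        gcongr
        calc B' ^ k = ∏ j : Fin k, B' := by simp
          _ ≤ _ := Finset.prod_le_prod' (fun j _ => hAS)
    _ = ∫⁻ y, (univ.pi (fun _ : Fin k => S)).indicator (fun _ => B) y
        ∂(Measure.pi (fun _ : Fin k => Abeta β)) := by
        rw [lintegral_indicator_const (MeasurableSet.univ_pi (fun _ => hSm)), Measure.pi_pi]
    _ ≤ _ := by
        apply lintegral_mono
        intro y
        by_cases hy : y ∈ univ.pi (fun _ : Fin k => S)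
        swap
        · rw [indicator_of_notMem hy]; exact zero_le
        rw [indicator_of_mem hy]
        have hy' : ∀ j, 1 - h < ‖y j‖ ∧ ‖y j‖ < 1 ∧ |(y j).arg| < Real.sqrt h := fun j => hy j (mem_univ j)
        set s : ℝ := -(∑ j : Fin k, a j.succ * (y j).arg) / a 0 with hs
        have ha0 := ha 0
        have hsum' : a 0 + ∑ j : Fin k, a j.succ = 1 := by rw [← hsum, Fin.sum_univ_succ]
        have hs' : |s| ≤ 1 / m * Real.sqrt h := by
          rw [hs, abs_div, abs_neg, abs_of_pos ha0, div_mul_eq_mul_div, one_mul]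
          apply div_le_div₀ hsq0.le _ hm (hma 0)
          calc _ ≤ ∑ j : Fin k, |a j.succ * (y j).arg| := Finset.abs_sum_le_sum_abs _ _
            _ ≤ ∑ j : Fin k, a j.succ * Real.sqrt h := by
              apply Finset.sum_le_sum
              intro j _
              rw [abs_mul, abs_of_pos (ha _)]
              exact mul_le_mul_of_nonneg_left (hy' j).2.2.le (ha _).le
            _ ≤ _ := by
              rw [← Finset.sum_mul]
              nlinarith
        have hsb := abs_le.1 hs'
        have hLe : L * Real.sqrt h = 1 / m * Real.sqrt h + Real.sqrt h := by rw [hL]; ring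
        have := Abeta_lower β hβ h hh hh2 (Ioo (s - h) (s + h))
          (Ioo_subset_Ioo (by linarith) (by linarith)) ((fun x => (x, y)) ⁻¹' G)
          (measurable_prodMk_right hGm) ?_
        · rw [Real.volume_Ioo, show s + h - (s - h) = 2 * h by ring] at this
          exact this
        intro r hr θ hθ
        have hr0 : 0 < r := by linarith [hr.1]
        have hest := lower_est (k+1) N a (Fin.cons r (fun j => ‖y j‖)) (Fin.cons θ (fun j => (y j).arg))
          ha hsum h L hh ?_ ?_ ?_ ?_ hNL ?_
        · rw [Fin.sum_univ_succ] at hest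
          simp only [Fin.cons_zero, Fin.cons_succ, pol_self] at hest
          exact hest
        · intro j; refine Fin.cases ?_ (fun i => ?_) j
          · exact hr0.le
          · exact norm_nonneg _
        · intro j; refine Fin.cases ?_ (fun i => ?_) j
          · exact hr.1
          · exact (hy' i).1
        · intro j; refine Fin.cases ?_ (fun i => ?_) j
          · exact hr.2
          · exact (hy' i).2.1
        · intro j; refine Fin.cases ?_ (fun i => ?_) j
          · simp only [Fin.cons_zero]
            rw [abs_le]
            constructor <;> linarith [hθ.1, hθ.2]
          · simp only [Fin.cons_succ]
            have := (hy' i).2.2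
            nlinarith
        · rw [Fin.sum_univ_succ]
          simp only [Fin.cons_zero, Fin.cons_succ]
          have e : a 0 * θ + ∑ j : Fin k, a j.succ * (y j).arg = a 0 * (θ - s) := by
            rw [hs]; field_simp; ring
          rw [e, abs_mul, abs_of_pos ha0]
          have h1 : |θ - s| ≤ h := by rw [abs_le]; constructor <;> linarith [hθ.1, hθ.2]
          have h2 : a 0 ≤ 1 := by
            have : 0 ≤ ∑ j : Fin k, a j.succ := Finset.sum_nonneg (fun j _ => (ha _).le)
            linarith
          nlinarith [abs_nonneg (θ - s)]


theorem rpow_two_nat (x : ℝ) (q : ℕ) : x ^ (2 * (q:ℝ)) = x ^ (2 * q) := by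
  have h : (2 * (q:ℝ)) = ((2 * q : ℕ) : ℝ) := by push_cast; rfl
  rw [h, Real.rpow_natCast]

theorem normSq_one_sub_pol (t θ : ℝ) :
    ‖1 - pol t θ‖ ^ 2 = (1 - t) ^ 2 + 2 * t * (1 - Real.cos θ) := by
  rw [← Complex.normSq_eq_norm_sq, Complex.normSq_apply]
  simp only [Complex.sub_re, Complex.sub_im, Complex.one_re, Complex.one_im, pol_re, pol_im]
  linear_combination t ^ 2 * Real.sin_sq_add_cos_sq θ

theorem one_sub_pol_lower (h ρ θ : ℝ) (hh : 0 < h) (hh1 : h ≤ 1) (hρ : ρ ∈ Ioo (0:ℝ) 1)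
    (hθ : θ ∈ Ioo (-Real.pi) Real.pi) :
    h ≤ ‖1 - ((1 - h : ℝ) : ℂ) * pol ρ θ‖ ∧ 1 - ρ ≤ ‖1 - ((1 - h : ℝ) : ℂ) * pol ρ θ‖ ∧
    θ ^ 2 / 25 ≤ ‖1 - ((1 - h : ℝ) : ℂ) * pol ρ θ‖ ^ 2 := by
  have e : ((1 - h : ℝ) : ℂ) * pol ρ θ = pol ((1 - h) * ρ) θ := by
    unfold pol; push_cast; ring
  rw [e]
  set t := (1 - h) * ρ with ht
  have ht0 : 0 ≤ t := mul_nonneg (by linarith) hρ.1.le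
  have ht1 : t ≤ 1 - h := by nlinarith [hρ.1, hρ.2]
  have ht2 : t ≤ ρ := by nlinarith [hρ.1, hρ.2]
  have hnorm : 1 - t ≤ ‖1 - pol t θ‖ := by
    have := norm_sub_norm_le (1:ℂ) (pol t θ)
    rw [norm_pol t θ ht0, norm_one] at this
    exact this
  refine ⟨by linarith, by linarith, ?_⟩
  rw [normSq_one_sub_pol]
  have hc := Real.cos_le_one_sub_mul_cos_sq (x := θ) (abs_le.2 ⟨hθ.1.le, hθ.2.le⟩)
  have hpi := Real.pi_lt_d2
  have hpi0 := Real.pi_gt_three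
  have hsq : Real.pi ^ 2 ≤ 10 := by nlinarith
  have hθ2 : θ ^ 2 ≤ Real.pi ^ 2 := sq_le_sq' hθ.1.le hθ.2.le
  have h1 : 1 / 5 * θ ^ 2 ≤ 1 - Real.cos θ := by
    have : 1 / 5 * θ ^ 2 ≤ 2 / Real.pi ^ 2 * θ ^ 2 := by
      apply mul_le_mul_of_nonneg_right _ (sq_nonneg _)
      rw [div_le_div_iff₀ (by norm_num) (by positivity)]
      linarith
    linarith
  have h0 : 0 ≤ θ ^ 2 := sq_nonneg _
  rcases le_total (1/4) t with h4 | h4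
  · nlinarith [sq_nonneg (1 - t)]
  · have h2 : 0 ≤ 2 * t * (1 - Real.cos θ) := by
      apply mul_nonneg (by linarith); linarith [Real.cos_le_one θ]
    nlinarith

theorem lint_theta (h : ℝ) (hh : 0 < h) :
    ∫⁻ θ : ℝ, ENNReal.ofReal (2 / h ^ 2 * (1 + (θ / (5 * h)) ^ 2)⁻¹) = ENNReal.ofReal (10 * Real.pi / h) := by
  have hi : Integrable (fun θ : ℝ => 2 / h ^ 2 * (1 + (θ / (5 * h)) ^ 2)⁻¹) :=
    (integrable_inv_one_add_sq.comp_div (by positivity)).const_mul _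
  rw [← ofReal_integral_eq_lintegral_ofReal hi (ae_of_all _ (fun x => by positivity))]
  congr 1
  rw [integral_const_mul, Measure.integral_comp_div (fun x : ℝ => (1 + x ^ 2)⁻¹) (5 * h),
    integral_univ_inv_one_add_sq, abs_of_pos (by positivity), smul_eq_mul]
  field_simp
  ring

/-- radial majorant -/
def radM (q : ℕ) (h ρ : ℝ) : ℝ := if 1 - h < ρ then (h ^ (2 * q))⁻¹ else ((1 - ρ) ^ (2 * q))⁻¹

theorem measurable_radM (q : ℕ) (h : ℝ) : Measurable (radM q h) := by
  unfold radM
  apply Measurable.ite (measurableSet_lt measurable_const measurable_id)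
  · exact measurable_const
  · fun_prop

theorem lint_rad (β : ℝ) (hβ : -1 < β) (q : ℕ) (hq : β + 1 < 2 * q) :
    ∃ C : ℝ, 0 < C ∧ ∀ h : ℝ, 0 < h → h ≤ 1 →
    ∫⁻ ρ in Ioo (0:ℝ) 1, wt β ρ * ENNReal.ofReal (radM q h ρ) ≤
      ENNReal.ofReal (C * h ^ (β + 1 - 2 * q)) := by
  have hpi := Real.pi_gt_three
  have hb : 0 < β + 1 := by linarith
  set D : ℝ := (β + 1) / Real.pi * 2 ^ (2 * q) / (2 * (2 * q - β - 1)) with hD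
  have hg : 0 < 2 * (q:ℝ) - β - 1 := by linarith
  have hD0 : 0 < D := by positivity
  refine ⟨D + 2 ^ (β + 1), by positivity, fun h hh hh1 => ?_⟩
  have hsub : Ioo (0:ℝ) 1 ⊆ Ioc 0 (1 - h) ∪ Ioo (1 - h) 1 := by
    intro x hx
    rcases le_or_gt x (1 - h) with h1 | h1
    · exact Or.inl ⟨hx.1, h1⟩
    · exact Or.inr ⟨h1, hx.2⟩
  have hpow : h ^ (β + 1 - 2 * q) = h ^ (β + 1) * (h ^ (2 * q))⁻¹ := by
    rw [Real.rpow_sub hh, div_eq_mul_inv]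
    congr 2
    exact rpow_two_nat _ q
  refine (lintegral_mono_set hsub).trans ((lintegral_union_le _ _ _).trans ?_)
  rw [add_mul, ENNReal.ofReal_add (by positivity) (by positivity)]
  apply add_le_add
  · set F : ℝ → ℝ := fun ρ => (β + 1) / Real.pi * 2 ^ (2 * q) * ((1 - ρ ^ 2) ^ (β - 2 * q) * ρ) with hF
    have hpos : ∀ ρ ∈ Icc (0:ℝ) (1 - h), 0 < 1 - ρ ^ 2 := by
      intro ρ hρ; nlinarith [hρ.1, hρ.2]
    have hFc : ContinuousOn F (Icc 0 (1 - h)) := by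
      apply ContinuousOn.mul continuousOn_const
      apply ContinuousOn.mul _ continuousOn_id
      apply ContinuousOn.rpow_const (by fun_prop)
      intro x hx
      exact Or.inl (hpos x hx).ne'
    have hle : (0:ℝ) ≤ 1 - h := by linarith
    have hFi : IntervalIntegrable F volume 0 (1 - h) := by
      apply ContinuousOn.intervalIntegrable
      rwa [uIcc_of_le hle]
    have hder : ∀ ρ ∈ uIcc 0 (1 - h), HasDerivAt (fun ρ : ℝ => D * (1 - ρ ^ 2) ^ (β - 2 * q + 1)) (F ρ) ρ := by
      intro ρ hρ
      rw [uIcc_of_le hle] at hρ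
      have h1 : HasDerivAt (fun r : ℝ => 1 - r ^ 2) (-(2 * ρ)) ρ := by
        simpa using (hasDerivAt_pow 2 ρ).const_sub 1
      have h2 := (h1.rpow_const (p := β - 2 * q + 1) (Or.inl (hpos ρ hρ).ne')).const_mul D
      have h3 : D * (-(2 * ρ) * (β - 2 * q + 1) * (1 - ρ ^ 2) ^ (β - 2 * q + 1 - 1)) = F ρ := by
        rw [add_sub_cancel_right, hF, hD]
        field_simp
        ring
      rw [h3] at h2
      exact h2
    have hI := intervalIntegral.integral_eq_sub_of_hasDerivAt hder hFi
    rw [intervalIntegral.integral_of_le hle] at hI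
    calc _ ≤ ∫⁻ ρ in Ioc 0 (1 - h), ENNReal.ofReal (F ρ) := by
          apply setLIntegral_mono' measurableSet_Ioc
          intro ρ hρ
          have hp := hpos ρ ⟨hρ.1.le, hρ.2⟩
          have hρ1 : ρ < 1 := by linarith [hρ.2]
          have hρ0 := hρ.1
          rw [radM, if_neg (not_lt.2 hρ.2), wt, ← ENNReal.ofReal_mul (by positivity)]
          apply ENNReal.ofReal_le_ofReal
          have h1 : ((1 - ρ) ^ (2 * q))⁻¹ ≤ 2 ^ (2 * q) * ((1 - ρ ^ 2) ^ (2 * q))⁻¹ := by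
            have : (1 - ρ ^ 2) ^ (2 * q) ≤ (2 * (1 - ρ)) ^ (2 * q) := by
              gcongr
              nlinarith
            rw [mul_pow] at this
            have hx : 0 < (1 - ρ) ^ (2 * q) := pow_pos (by linarith) _
            rw [← div_eq_mul_inv, inv_eq_one_div, div_le_div_iff₀ hx (by positivity)]
            linarith
          have h2 : (1 - ρ ^ 2) ^ (β - 2 * q) = (1 - ρ ^ 2) ^ β * ((1 - ρ ^ 2) ^ (2 * q))⁻¹ := by
            rw [Real.rpow_sub hp, div_eq_mul_inv]
            congr 2
            exact rpow_two_nat _ q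
          calc _ ≤ (β + 1) / Real.pi * (1 - ρ ^ 2) ^ β * ρ * (2 ^ (2 * q) * ((1 - ρ ^ 2) ^ (2 * q))⁻¹) := by
                gcongr
            _ = _ := by rw [hF]; simp only; rw [h2]; ring
      _ = ENNReal.ofReal (∫ ρ in Ioc 0 (1 - h), F ρ) := by
          rw [ofReal_integral_eq_lintegral_ofReal]
          · exact (intervalIntegrable_iff_integrableOn_Ioc_of_le hle).1 hFi
          · rw [Filter.EventuallyLE, ae_restrict_iff' measurableSet_Ioc]
            refine ae_of_all _ (fun ρ hρ => ?_)
            have hp := hpos ρ ⟨hρ.1.le, hρ.2⟩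
            have hρ0 := hρ.1
            simp only [hF, Pi.zero_apply]
            positivity
      _ ≤ _ := by
          apply ENNReal.ofReal_le_ofReal
          rw [hI]
          have h1 : (1 - (1 - h) ^ 2) ^ (β - 2 * q + 1) ≤ h ^ (β + 1 - 2 * q) := by
            rw [show β - 2 * (q:ℝ) + 1 = β + 1 - 2 * q by ring]
            apply Real.rpow_le_rpow_of_nonpos hh (by nlinarith) (by linarith)
          have h2 : 0 ≤ D * (1 - (0:ℝ) ^ 2) ^ (β - 2 * q + 1) := by
            have : (0:ℝ) ≤ 1 - 0 ^ 2 := by norm_num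
            positivity
          have h3 := mul_le_mul_of_nonneg_left h1 hD0.le
          linarith
  · calc _ = ∫⁻ ρ in Ioo (1 - h) 1, wt β ρ * ENNReal.ofReal (h ^ (2 * q))⁻¹ := by
          apply setLIntegral_congr_fun measurableSet_Ioo
          intro ρ hρ
          simp only [radM, if_pos hρ.1]
      _ = ENNReal.ofReal ((2 * h - h ^ 2) ^ (β + 1) / (2 * Real.pi)) * ENNReal.ofReal (h ^ (2 * q))⁻¹ := by
          rw [lintegral_mul_const _ (measurable_wt β), lint_wt β hβ h hh hh1]
      _ ≤ _ := by
          have h0 : 0 ≤ 2 * h - h ^ 2 := by nlinarith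
          rw [← ENNReal.ofReal_mul (by positivity)]
          apply ENNReal.ofReal_le_ofReal
          rw [hpow, ← mul_assoc, ← Real.mul_rpow (by norm_num) hh.le]
          gcongr
          calc (2 * h - h ^ 2) ^ (β + 1) / (2 * Real.pi) ≤ (2 * h - h ^ 2) ^ (β + 1) :=
                div_le_self (by positivity) (by linarith)
            _ ≤ (2 * h) ^ (β + 1) := Real.rpow_le_rpow h0 (by nlinarith) hb.le

theorem FR (β : ℝ) (hβ : -1 < β) (q : ℕ) (hq : β + 1 < 2 * q) :
    ∃ C : ℝ, 0 < C ∧ ∀ h : ℝ, 0 < h → h ≤ 1 →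
    ∫⁻ z, ENNReal.ofReal (‖((1 - ((1 - h : ℝ) : ℂ) * z) ^ (q + 1))⁻¹‖ ^ 2) ∂(Abeta β) ≤
      ENNReal.ofReal (C * h ^ (β - 2 * q)) := by
  obtain ⟨C, hC, hCb⟩ := lint_rad β hβ q hq
  have hpi := Real.pi_pos
  refine ⟨C * (10 * Real.pi), by positivity, fun h hh hh1 => ?_⟩
  rw [lint_polar β hβ _ (by fun_prop)]
  calc _ ≤ ∫⁻ p in Ioo (0:ℝ) 1 ×ˢ Ioo (-Real.pi) Real.pi,
        (wt β p.1 * ENNReal.ofReal (radM q h p.1)) *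
          ENNReal.ofReal (2 / h ^ 2 * (1 + (p.2 / (5 * h)) ^ 2)⁻¹) := by
        apply setLIntegral_mono' (measurableSet_Ioo.prod measurableSet_Ioo)
        rintro ⟨ρ, θ⟩ ⟨hρ, hθ⟩
        simp only at hρ hθ ⊢
        rw [mul_assoc]
        gcongr
        obtain ⟨g1, g2, g3⟩ := one_sub_pol_lower h ρ θ hh hh1 hρ hθ
        set W := ‖1 - ((1 - h : ℝ) : ℂ) * pol ρ θ‖ with hW
        have hW0 : 0 < W := by linarith
        have hr0 : 0 ≤ radM q h ρ := by
          unfold radM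
          have : 0 < 1 - ρ := by linarith [hρ.2]
          split_ifs <;> positivity
        rw [← ENNReal.ofReal_mul hr0]
        apply ENNReal.ofReal_le_ofReal
        rw [norm_inv, norm_pow, ← hW]
        have e : ((W ^ (q + 1))⁻¹) ^ 2 = (W ^ (2 * q))⁻¹ * (W ^ 2)⁻¹ := by
          rw [← mul_inv, inv_pow]; congr 1; ring
        rw [e]
        have a1 : (W ^ (2 * q))⁻¹ ≤ radM q h ρ := by
          unfold radM
          have : 0 < 1 - ρ := by linarith [hρ.2]
          split_ifs <;> gcongr
        have a2 : (W ^ 2)⁻¹ ≤ 2 / h ^ 2 * (1 + (θ / (5 * h)) ^ 2)⁻¹ := by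
          have e2 : 2 / h ^ 2 * (1 + (θ / (5 * h)) ^ 2)⁻¹ = ((h ^ 2 + θ ^ 2 / 25) / 2)⁻¹ := by
            field_simp
            try ring
          rw [e2]
          have : h ^ 2 ≤ W ^ 2 := by gcongr
          gcongr
          linarith
        exact mul_le_mul a1 a2 (by positivity) hr0
    _ = (∫⁻ ρ in Ioo (0:ℝ) 1, wt β ρ * ENNReal.ofReal (radM q h ρ)) *
        ∫⁻ θ in Ioo (-Real.pi) Real.pi, ENNReal.ofReal (2 / h ^ 2 * (1 + (θ / (5 * h)) ^ 2)⁻¹) := by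
        rw [Measure.volume_eq_prod, ← Measure.prod_restrict]
        refine lintegral_prod_mul (f := fun ρ => wt β ρ * ENNReal.ofReal (radM q h ρ))
          (g := fun θ => ENNReal.ofReal (2 / h ^ 2 * (1 + (θ / (5 * h)) ^ 2)⁻¹)) ?_ ?_
        · exact ((measurable_wt β).mul (measurable_radM q h).ennreal_ofReal).aemeasurable
        · fun_prop
    _ ≤ ENNReal.ofReal (C * h ^ (β + 1 - 2 * q)) * ENNReal.ofReal (10 * Real.pi / h) := by
        gcongr
        · exact hCb h hh hh1
        · rw [← lint_theta h hh]
          exact setLIntegral_le_lintegral _ _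
    _ = _ := by
        rw [← ENNReal.ofReal_mul (by positivity)]
        congr 1
        have : h ^ (β + 1 - 2 * q) = h ^ (β - 2 * q) * h := by
          nth_rewrite 3 [← Real.rpow_one h]
          rw [← Real.rpow_add hh]; congr 1; ring
        rw [this]
        field_simp


theorem exists_rot (N : ℕ) (hN : 1 ≤ N) (α ζ : ℂ) (hα : α ≠ 0) (hζ : ‖ζ‖ = 1) :
    ∃ c : ℂ, ‖c‖ = 1 ∧ α * c ^ N = (‖α‖ : ℂ) * ζ := by
  obtain ⟨c, hc⟩ := IsAlgClosed.exists_pow_nat_eq ((‖α‖ : ℂ) * ζ / α) (by omega : 0 < N)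
  refine ⟨c, ?_, ?_⟩
  · have h1 : ‖c‖ ^ N = 1 := by
      rw [← norm_pow, hc, norm_div, norm_mul, hζ, mul_one, Complex.norm_real, norm_norm,
        div_self (norm_ne_zero_iff.2 hα)]
    exact (pow_eq_one_iff_of_nonneg (norm_nonneg _) (by omega)).1 h1
  · rw [hc]; field_simp

theorem ae_polydisc (n : ℕ) (β : ℝ) : ∀ᵐ z ∂(Vbeta n β), z ∈ polydisc n :=
  (withDensity_absolutelyContinuous _ _).ae_le (ae_restrict_mem (measurableSet_polydisc n))

theorem g_norm_le (n N : ℕ) (α : Fin n → ℂ) (hα : ∑ j, ‖α j‖ = 1) (z : Fin n → ℂ)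
    (hz : z ∈ polydisc n) : ‖∑ j, α j * z j ^ N‖ ≤ 1 := by
  refine (norm_sum_le _ _).trans ?_
  rw [← hα]
  apply Finset.sum_le_sum
  intro j _
  rw [norm_mul, norm_pow]
  exact mul_le_of_le_one_right (norm_nonneg _) (pow_le_one₀ (norm_nonneg _) (hz j).le)

theorem exponent_cmp (M p C h1 : ℝ) (hh1 : 0 < h1)
    (H : ∀ h, 0 < h → h < h1 → h ^ M ≤ C * h ^ p) : p ≤ M := by
  by_contra hc
  push Not at hc
  have hs : 0 < p - M := by linarith
  have ht : Filter.Tendsto (fun h : ℝ => C * h ^ (p - M)) (nhdsWithin 0 (Ioi 0)) (nhds 0) := by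
    have h1 : Filter.Tendsto (fun h : ℝ => C * h ^ (p - M)) (nhds 0) (nhds (C * 0 ^ (p - M))) := by
      apply Continuous.tendsto
      exact continuous_const.mul (Continuous.rpow_const continuous_id (fun x => Or.inr hs.le))
    rw [Real.zero_rpow hs.ne', mul_zero] at h1
    exact h1.mono_left nhdsWithin_le_nhds
  have : (1:ℝ) ≤ 0 := by
    apply ge_of_tendsto ht
    have : Ioo 0 h1 ∈ nhdsWithin (0:ℝ) (Ioi 0) := Ioo_mem_nhdsGT hh1
    filter_upwards [this] with h hh
    have h2 := H h hh.1 hh.2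
    rw [Real.rpow_sub hh.1, ← mul_div_assoc, le_div_iff₀ (Real.rpow_pos_of_pos hh.1 _), one_mul]
    exact h2
  linarith

/-- test function -/
def testF (k q : ℕ) (h : ℝ) (z : Fin (k+1) → ℂ) : ℂ :=
  ∏ i : Fin k, ((1 - ((1 - h : ℝ) : ℂ) * z i.castSucc) ^ (q + 1))⁻¹

theorem testF_diff (k q : ℕ) (h : ℝ) (hh : 0 < h) (hh1 : h ≤ 1) :
    DifferentiableOn ℂ (testF k q h) (polydisc (k+1)) := by
  have D : ∀ i : Fin k, DifferentiableOn ℂ (fun z : Fin (k+1) → ℂ =>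
      ((1 - ((1 - h : ℝ) : ℂ) * z i.castSucc) ^ (q + 1))⁻¹) (polydisc (k+1)) := by
    intro i
    apply DifferentiableOn.fun_inv
    · fun_prop
    · intro z hz
      apply pow_ne_zero
      intro h0
      have h1 : ((1 - h : ℝ) : ℂ) * z i.castSucc = 1 := (sub_eq_zero.1 h0).symm
      have h2 : (1 - h) * ‖z i.castSucc‖ = 1 := by
        have h3 := congrArg norm h1
        rwa [norm_mul, Complex.norm_real, Real.norm_of_nonneg (by linarith), norm_one] at h3
      nlinarith [hz i.castSucc, norm_nonneg (z i.castSucc)]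
  intro z hz
  exact (HasFDerivWithinAt.finsetProd (u := Finset.univ)
    (fun i _ => (D i z hz).hasFDerivWithinAt)).differentiableWithinAt

theorem testF_norm (k q : ℕ) (h : ℝ) (β : ℝ) (hβ : -1 < β) :
    ∫⁻ z, ENNReal.ofReal (‖testF k q h z‖ ^ 2) ∂(Vbeta (k+1) β) =
      (∫⁻ z, ENNReal.ofReal (‖((1 - ((1 - h : ℝ) : ℂ) * z) ^ (q + 1))⁻¹‖ ^ 2) ∂(Abeta β)) ^ k *
        Abeta β univ := by
  rw [Vbeta_eq _ β hβ]
  set F : ℂ → ℝ≥0∞ := fun z => ENNReal.ofReal (‖((1 - ((1 - h : ℝ) : ℂ) * z) ^ (q + 1))⁻¹‖ ^ 2) with hF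
  have hFm : Measurable F := by rw [hF]; fun_prop
  have e : ∀ z : Fin (k+1) → ℂ, ENNReal.ofReal (‖testF k q h z‖ ^ 2) =
      ∏ j : Fin (k+1), (if (j:ℕ) < k then F else 1) (z j) := by
    intro z
    rw [Fin.prod_univ_castSucc]
    simp only [Fin.val_castSucc, Fin.is_lt, if_true, Fin.val_last, lt_irrefl, if_false, Pi.one_apply,
      mul_one]
    unfold testF
    rw [norm_prod, ← Finset.prod_pow, ENNReal.ofReal_prod_of_nonneg (fun _ _ => by positivity)]
  simp only [e]
  rw [lint_fin_prod (Abeta β) (k+1) (fun j => if (j:ℕ) < k then F else 1)]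
  · rw [Fin.prod_univ_castSucc]
    simp
  · intro j
    split_ifs
    · exact hFm
    · exact measurable_one

theorem necessity (k N : ℕ) (hN : 1 ≤ N) (α : Fin (k+1) → ℂ)
    (hα : ∑ j, ‖α j‖ = 1) (hα0 : ∀ j, α j ≠ 0) (β : ℝ) (hβ : -1 < β)
    (Φ : (Fin (k+1) → ℂ) → (Fin (k+1) → ℂ))
    (hΦ : ∀ z, ∀ i : Fin k, Φ z i.castSucc = ∑ j, α j * z j ^ N)
    (hb : bddBergman (k+1) β Φ) :
    (k:ℝ) * (β + 2) ≤ ((k:ℝ) + 1) * (β + 1) + ((k:ℝ) + 2) / 2 := by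
  obtain ⟨C, hC, hCb⟩ := hb
  obtain ⟨c, K, h1, hc, hK, hh1, hh11, hV⟩ := V_lower k N hN (fun j => ‖α j‖)
    (fun j => norm_pos_iff.2 (hα0 j)) hα β hβ
  obtain ⟨q, hq⟩ : ∃ q : ℕ, β + 1 < 2 * q := by
    obtain ⟨q, hq⟩ := exists_nat_gt (β + 1)
    exact ⟨q, by have : (0:ℝ) ≤ q := by positivity
                 linarith⟩
  obtain ⟨C2, hC2, hFR⟩ := FR β hβ q hq
  choose u hu1 hu2 using fun j => exists_rot N hN (α j) 1 (hα0 j) (by simp)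
  set M := ((k:ℝ) + 1) * (β + 1) + ((k:ℝ) + 2) / 2 with hM
  set T := (Abeta β univ).toReal with hT
  have hT0 : 0 ≤ T := ENNReal.toReal_nonneg
  have hTe : Abeta β univ = ENNReal.ofReal T := (ENNReal.ofReal_toReal (Abeta_univ_lt β hβ).ne).symm
  set e := 2 * (q + 1) * k with he
  apply exponent_cmp M _ (C * C2 ^ k * T * (K + 1) ^ e / c) h1 hh1
  intro h hh hhlt
  have hhle : h ≤ 1 := by linarith
  have hV' : ENNReal.ofReal (c * h ^ M) ≤ Vbeta (k+1) β {z | ‖1 - ∑ j, α j * z j ^ N‖ ≤ K * h} := by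
    refine (hV h hh hhlt).trans (le_of_eq ?_)
    have hms : MeasurableSet {z : Fin (k+1) → ℂ | ‖1 - ∑ j, α j * z j ^ N‖ ≤ K * h} := by
      apply measurableSet_le _ measurable_const
      fun_prop
    rw [← (V_rot (k+1) β hβ u hu1).measure_preimage hms.nullMeasurableSet]
    congr 1
    ext z
    simp only [mem_preimage, mem_ofPred_eq, mul_pow, ← mul_assoc, hu2, mul_one]
  have hmain := hCb (testF k q h) (testF_diff k q h hh hhle)
  rw [testF_norm k q h β hβ] at hmain
  have hlow : ENNReal.ofReal ((((K + 1) * h) ^ e)⁻¹) * ENNReal.ofReal (c * h ^ M) ≤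
      ∫⁻ z, ENNReal.ofReal (‖testF k q h (Φ z)‖ ^ 2) ∂(Vbeta (k+1) β) := by
    calc _ ≤ ENNReal.ofReal ((((K + 1) * h) ^ e)⁻¹) *
          Vbeta (k+1) β {z | ‖1 - ∑ j, α j * z j ^ N‖ ≤ K * h} := by gcongr
      _ = ∫⁻ z, ({z | ‖1 - ∑ j, α j * z j ^ N‖ ≤ K * h} : Set (Fin (k+1) → ℂ)).indicator
            (fun _ => ENNReal.ofReal ((((K + 1) * h) ^ e)⁻¹)) z ∂(Vbeta (k+1) β) := by
          rw [lintegral_indicator_const]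
          apply measurableSet_le _ measurable_const
          fun_prop
      _ ≤ _ := by
          apply lintegral_mono_ae
          filter_upwards [ae_polydisc (k+1) β] with z hz
          by_cases hm : z ∈ ({z | ‖1 - ∑ j, α j * z j ^ N‖ ≤ K * h} : Set (Fin (k+1) → ℂ))
          swap
          · rw [indicator_of_notMem hm]; exact zero_le
          rw [indicator_of_mem hm]
          apply ENNReal.ofReal_le_ofReal
          have hm' : ‖1 - ∑ j, α j * z j ^ N‖ ≤ K * h := hm
          have hg := g_norm_le (k+1) N α hα z hz
          simp only [testF, hΦ z, Finset.prod_const, Finset.card_univ, Fintype.card_fin]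
          set g := ∑ j, α j * z j ^ N with hgdef
          set W := ‖1 - ((1 - h : ℝ) : ℂ) * g‖ with hW
          have hW1 : W ≤ (K + 1) * h := by
            have e1 : 1 - ((1 - h : ℝ) : ℂ) * g = (1 - g) + (h : ℂ) * g := by push_cast; ring
            rw [hW, e1]
            refine (norm_add_le _ _).trans ?_
            rw [norm_mul, Complex.norm_real, Real.norm_of_nonneg hh.le]
            nlinarith
          have hW0 : 0 < W := by
            have := norm_sub_norm_le (1:ℂ) (((1 - h : ℝ) : ℂ) * g)
            rw [norm_one, norm_mul, Complex.norm_real, Real.norm_of_nonneg (by linarith)] at this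
            have h3 : (1 - h) * ‖g‖ ≤ (1 - h) * 1 := mul_le_mul_of_nonneg_left hg (by linarith)
            linarith
          rw [norm_pow, norm_inv, norm_pow, ← hW]
          have e2 : (((W ^ (q + 1))⁻¹) ^ k) ^ 2 = (W ^ e)⁻¹ := by
            rw [inv_pow, inv_pow, he]; congr 1; ring
          rw [e2]
          gcongr
  have hfin := hlow.trans (hmain.trans (mul_le_mul_right (mul_le_mul_left (pow_le_pow_left' (hFR h hh hhle) k) _) _))
  rw [hTe, ← ENNReal.ofReal_pow (by positivity), ← ENNReal.ofReal_mul (by positivity),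
    ← ENNReal.ofReal_mul (by positivity), ← ENNReal.ofReal_mul (by positivity),
    ENNReal.ofReal_le_ofReal_iff (by positivity)] at hfin
  have hpw : h ^ ((k:ℝ) * (β + 2)) = (h ^ (β - 2 * q)) ^ k * h ^ e := by
    rw [← Real.rpow_natCast, ← Real.rpow_natCast h e, ← Real.rpow_mul hh.le, ← Real.rpow_add hh, he]
    congr 1; push_cast; ring
  rw [hpw]
  have hhe : 0 < (K + 1) ^ e * h ^ e := by positivity
  rw [mul_pow (K + 1), inv_mul_le_iff₀ hhe] at hfin
  rw [div_mul_eq_mul_div, le_div_iff₀ hc]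
  rw [mul_pow] at hfin
  linarith


/-- squared modulus cut off to the polydisc -/
def Fsq (n : ℕ) (f : (Fin n → ℂ) → ℂ) : (Fin n → ℂ) → ℝ≥0∞ :=
  (polydisc n).indicator (fun z => ENNReal.ofReal (‖f z‖ ^ 2))

theorem isOpen_polydisc (n : ℕ) : IsOpen (polydisc n) := by
  rw [polydisc_eq]
  exact isOpen_set_pi finite_univ (fun _ _ => isOpen_ball)

theorem Fsq_meas (n : ℕ) (f : (Fin n → ℂ) → ℂ) (hf : DifferentiableOn ℂ f (polydisc n)) :
    Measurable (Fsq n f) := by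
  classical
  unfold Fsq
  rw [← piecewise_eq_indicator]
  apply ContinuousOn.measurable_piecewise _ continuousOn_const (measurableSet_polydisc n)
  apply ENNReal.continuous_ofReal.comp_continuousOn
  exact (hf.continuousOn.norm).pow 2

theorem disc_mean (F : ℂ → ℂ) (U : Set ℂ) (hF : DifferentiableOn ℂ F U)
    (hU : closedBall (0:ℂ) 1 ⊆ U) :
    ENNReal.ofReal (‖F 0‖ ^ 2) * ENNReal.ofReal (2 * Real.pi) ≤
      ∫⁻ θ in Ioc (0:ℝ) (2 * Real.pi), ENNReal.ofReal (‖F (circleMap 0 1 θ)‖ ^ 2) := by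
  have h1 : DiffContOnCl ℂ (fun z => F z ^ 2) (ball 0 |1|) := by
    rw [abs_one]
    exact (hF.pow 2).diffContOnCl_ball hU
  have h2 := h1.circleAverage
  rw [Real.circleAverage_def, intervalIntegral.integral_of_le Real.two_pi_pos.le] at h2
  have h3 : ∫ θ in Ioc (0:ℝ) (2 * Real.pi), F (circleMap 0 1 θ) ^ 2 =
      (2 * Real.pi) • (F 0) ^ 2 := by
    rw [← h2, smul_smul, mul_inv_cancel₀ Real.two_pi_pos.ne', one_smul]
  have h4 := enorm_integral_le_lintegral_enorm (μ := volume.restrict (Ioc (0:ℝ) (2 * Real.pi)))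
    (fun θ => F (circleMap 0 1 θ) ^ 2)
  rw [h3] at h4
  have e : ∀ z : ℂ, ‖z ^ 2‖ₑ = ENNReal.ofReal (‖z‖ ^ 2) := by
    intro z
    rw [← ofReal_norm_eq_enorm, norm_pow]
  simp only [e] at h4
  refine le_trans (le_of_eq ?_) h4
  rw [← ofReal_norm_eq_enorm, norm_smul, norm_pow, ENNReal.ofReal_mul (norm_nonneg _), mul_comm,
    Real.norm_of_nonneg Real.two_pi_pos.le]

theorem vol_rot (n : ℕ) (c : ℂ) (hc : ‖c‖ = 1) :
    MeasurePreserving (fun (z : Fin n → ℂ) j => c * z j) volume volume := by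
  have hv : MeasurePreserving (fun z : ℂ => c * z) volume volume := by
    have hcc : c ∈ Submonoid.unitSphere ℂ := by
      rw [← SetLike.mem_coe, Submonoid.coe_unitSphere]; simpa using hc
    have h1 : MeasurePreserving (rotation (⟨c, hcc⟩ : Circle)) volume volume :=
      LinearIsometryEquiv.measurePreserving _
    exact h1
  exact volume_preserving_pi (fun _ => hv)

theorem smv (n : ℕ) (f : (Fin n → ℂ) → ℂ) (hf : DifferentiableOn ℂ f (polydisc n))
    (c : Fin n → ℂ) (r : Fin n → ℝ) (hr : ∀ j, ‖c j‖ + r j ≤ 1) :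
    ENNReal.ofReal (‖f c‖ ^ 2) * volume (univ.pi fun j => ball (0:ℂ) (r j)) ≤
      ∫⁻ ζ in (univ.pi fun j => ball (c j) (r j)), Fsq n f ζ := by
  set D : Set (Fin n → ℂ) := univ.pi fun j => ball (0:ℂ) (r j) with hD
  have hDm : MeasurableSet D := MeasurableSet.univ_pi (fun _ => measurableSet_ball)
  have hFm := Fsq_meas n f hf
  have hin : ∀ u ∈ D, ∀ l : ℂ, ‖l‖ ≤ 1 → c + l • u ∈ polydisc n := by
    intro u hu l hl j
    have h1 : ‖u j‖ < r j := by simpa using hu j (mem_univ j)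
    have h2 : ‖c j + l * u j‖ ≤ ‖c j‖ + ‖l‖ * ‖u j‖ := by
      refine (norm_add_le _ _).trans ?_
      rw [norm_mul]
    have h3 : ‖l‖ * ‖u j‖ ≤ ‖u j‖ := mul_le_of_le_one_left (norm_nonneg _) hl
    have := hr j
    simp only [Pi.add_apply, Pi.smul_apply, smul_eq_mul]
    linarith
  have hmean : ∀ u ∈ D, ENNReal.ofReal (‖f c‖ ^ 2) * ENNReal.ofReal (2 * Real.pi) ≤
      ∫⁻ θ in Ioc (0:ℝ) (2 * Real.pi), Fsq n f (c + circleMap 0 1 θ • u) := by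
    intro u hu
    have hd : DifferentiableOn ℂ (fun l : ℂ => f (c + l • u)) {l | c + l • u ∈ polydisc n} := by
      apply hf.comp (t := polydisc n)
      · fun_prop
      · intro l hl; exact hl
    have h1 := disc_mean (fun l : ℂ => f (c + l • u)) _ hd (by
      intro l hl
      exact hin u hu l (by simpa using hl))
    simp only [zero_smul, add_zero] at h1
    refine h1.trans (le_of_eq ?_)
    apply lintegral_congr
    intro θ
    unfold Fsq
    rw [indicator_of_mem (hin u hu _ (by simp))]
  have hrot : ∀ θ : ℝ, ∫⁻ u in D, Fsq n f (c + circleMap 0 1 θ • u) =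
      ∫⁻ u in D, Fsq n f (c + u) := by
    intro θ
    have hc1 : ‖circleMap 0 1 θ‖ = 1 := by simp
    have h1 := (vol_rot n (circleMap 0 1 θ) hc1).setLIntegral_comp_preimage hDm
      (f := fun u => Fsq n f (c + u)) (by fun_prop)
    rw [← h1]
    have : (fun (z : Fin n → ℂ) j => circleMap 0 1 θ * z j) ⁻¹' D = D := by
      ext z
      simp [hD, -norm_circleMap_zero, hc1]
    rw [this]
    rfl
  have htrans : ∫⁻ u in D, Fsq n f (c + u) =
      ∫⁻ ζ in (univ.pi fun j => ball (c j) (r j)), Fsq n f ζ := by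
    rw [← lintegral_indicator hDm,
      ← lintegral_indicator (MeasurableSet.univ_pi (fun _ => measurableSet_ball)),
      ← lintegral_add_left_eq_self ((univ.pi fun j => ball (c j) (r j)).indicator (Fsq n f)) c]
    apply lintegral_congr
    intro u
    have : u ∈ D ↔ c + u ∈ (univ.pi fun j => ball (c j) (r j)) := by
      simp [hD, dist_eq_norm]
    by_cases h : u ∈ D
    · rw [indicator_of_mem h, indicator_of_mem (this.1 h)]
    · rw [indicator_of_notMem h, indicator_of_notMem (fun h' => h (this.2 h'))]
  rw [← htrans]
  have hpi0 : ENNReal.ofReal (2 * Real.pi) ≠ 0 := by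
    simpa using Real.pi_pos
  have hpit : ENNReal.ofReal (2 * Real.pi) ≠ ∞ := ENNReal.ofReal_ne_top
  have key : (ENNReal.ofReal (‖f c‖ ^ 2) * volume D) * ENNReal.ofReal (2 * Real.pi) ≤
      (∫⁻ u in D, Fsq n f (c + u)) * ENNReal.ofReal (2 * Real.pi) := by
    calc _ = ∫⁻ u in D, ENNReal.ofReal (‖f c‖ ^ 2) * ENNReal.ofReal (2 * Real.pi) := by
          rw [setLIntegral_const]; ring
      _ ≤ ∫⁻ u in D, ∫⁻ θ in Ioc (0:ℝ) (2 * Real.pi), Fsq n f (c + circleMap 0 1 θ • u) :=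
          setLIntegral_mono' hDm hmean
      _ = ∫⁻ θ in Ioc (0:ℝ) (2 * Real.pi), ∫⁻ u in D, Fsq n f (c + circleMap 0 1 θ • u) := by
          apply lintegral_lintegral_swap
          apply Measurable.aemeasurable
          apply hFm.comp
          apply Continuous.measurable
          have : Continuous (circleMap 0 1) := continuous_circleMap 0 1
          fun_prop
      _ = _ := by
          simp only [hrot]
          rw [setLIntegral_const]
          simp
  exact (ENNReal.mul_le_mul_iff_left hpi0 hpit).1 key


theorem rpow_cmp (β : ℝ) : ∃ c0 : ℝ, 0 < c0 ∧ ∀ t x : ℝ, 0 < t → t / 2 ≤ x → x ≤ 3 * t →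
    c0 * t ^ β ≤ x ^ β := by
  refine ⟨min ((1/2 : ℝ) ^ β) ((3:ℝ) ^ β), by positivity, ?_⟩
  intro t x ht h1 h2
  rcases le_total 0 β with hb | hb
  · calc _ ≤ (1/2 : ℝ) ^ β * t ^ β := by gcongr; exact min_le_left _ _
      _ = (t / 2) ^ β := by rw [← Real.mul_rpow (by norm_num) ht.le]; congr 1; ring
      _ ≤ _ := Real.rpow_le_rpow (by positivity) h1 hb
  · calc _ ≤ (3 : ℝ) ^ β * t ^ β := by gcongr; exact min_le_right _ _
      _ = (3 * t) ^ β := by rw [← Real.mul_rpow (by norm_num) ht.le]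
      _ ≤ _ := Real.rpow_le_rpow_of_nonpos (by linarith) h2 hb

theorem pt_est (n : ℕ) (β : ℝ) (hβ : -1 < β) : ∃ K : ℝ, 0 < K ∧
    ∀ f : (Fin n → ℂ) → ℂ, DifferentiableOn ℂ f (polydisc n) → ∀ c ∈ polydisc n,
      ENNReal.ofReal (‖f c‖ ^ 2) * ∏ j, ENNReal.ofReal (K * (1 - ‖c j‖) ^ (β + 2)) ≤
      ∫⁻ ζ in (univ.pi fun j => ball (c j) ((1 - ‖c j‖) / 2)), Fsq n f ζ ∂(Vbeta n β) := by
  obtain ⟨c0, hc0, H⟩ := rpow_cmp β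
  have hb : 0 < β + 1 := by linarith
  have hpi := Real.pi_pos
  refine ⟨(β + 1) * c0 / 4, by positivity, ?_⟩
  intro f hf c hc
  set r : Fin n → ℝ := fun j => (1 - ‖c j‖) / 2 with hr
  have ht : ∀ j, 0 < 1 - ‖c j‖ := fun j => by have := hc j; linarith
  have hFm := Fsq_meas n f hf
  have h1 := smv n f hf c r (fun j => by have := ht j; simp only [hr]; linarith)
  set Q : Set (Fin n → ℂ) := univ.pi fun j => ball (c j) (r j) with hQ
  have hQm : MeasurableSet Q := MeasurableSet.univ_pi (fun _ => measurableSet_ball)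
  have hQz : ∀ z ∈ Q, ∀ j, ‖z j‖ ≤ ‖c j‖ + r j ∧ ‖c j‖ - r j ≤ ‖z j‖ := by
    intro z hz j
    have h2 : ‖z j - c j‖ < r j := by
      have := hz j (mem_univ j)
      rwa [mem_ball, dist_eq_norm] at this
    have h3 := norm_sub_norm_le (z j) (c j)
    have h4 := norm_sub_norm_le (c j) (z j)
    rw [norm_sub_rev] at h4
    constructor <;> linarith
  have hQp : Q ⊆ polydisc n := by
    intro z hz j
    have h2 := (hQz z hz j).1
    have := ht j
    simp only [hr] at h2
    linarith
  set W : ℝ≥0∞ := ENNReal.ofReal (∏ j, ((β + 1) * (c0 * (1 - ‖c j‖) ^ β) / Real.pi)) with hW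
  have hprod : ∏ j, ENNReal.ofReal ((β + 1) * c0 / 4 * (1 - ‖c j‖) ^ (β + 2)) =
      volume (univ.pi fun j => ball (0:ℂ) (r j)) * W := by
    rw [volume_pi_pi, hW, ENNReal.ofReal_prod_of_nonneg, ← Finset.prod_mul_distrib]
    · apply Finset.prod_congr rfl
      intro j _
      have hrj : 0 ≤ r j := by have := ht j; simp only [hr]; linarith
      rw [Complex.volume_ball, ← ENNReal.ofReal_pow hrj]
      have e : ((NNReal.pi : NNReal) : ℝ≥0∞) = ENNReal.ofReal Real.pi := by
        rw [← NNReal.coe_real_pi, ENNReal.ofReal_coe_nnreal]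
      rw [e, ← ENNReal.ofReal_mul (by positivity), ← ENNReal.ofReal_mul (by positivity)]
      congr 1
      rw [Real.rpow_add (ht j)]
      simp only [hr, Real.rpow_two]
      field_simp
      ring
    · intro j _
      have := ht j
      positivity
  rw [hprod, ← mul_assoc]
  have hdm : Measurable (fun z : Fin n → ℂ =>
      ENNReal.ofReal (∏ j, ((β + 1) * (1 - ‖z j‖ ^ 2) ^ β / Real.pi))) := by fun_prop
  calc _ ≤ (∫⁻ ζ in Q, Fsq n f ζ) * W := by gcongr
    _ = ∫⁻ ζ in Q, W * Fsq n f ζ := by rw [lintegral_const_mul _ hFm, mul_comm]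
    _ ≤ ∫⁻ ζ in Q, ENNReal.ofReal (∏ j, ((β + 1) * (1 - ‖ζ j‖ ^ 2) ^ β / Real.pi)) * Fsq n f ζ := by
        apply setLIntegral_mono' hQm
        intro z hz
        gcongr
        rw [hW]
        apply ENNReal.ofReal_le_ofReal
        apply Finset.prod_le_prod
        · intro j _
          have := ht j
          positivity
        · intro j _
          have h2 := hQz z hz j
          have h3 := ht j
          have h4 := norm_nonneg (z j)
          have h5 := hQp hz j
          simp only [hr] at h2
          gcongr
          apply H _ _ (ht j)
          · nlinarith
          · nlinarith
    _ = _ := by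
        unfold Vbeta
        rw [restrict_withDensity hQm, lintegral_withDensity_eq_lintegral_mul _ hdm hFm,
          Measure.restrict_restrict_of_subset hQp]
        rfl

theorem V_upper_rot (k N : ℕ) (hN : 1 ≤ N) (α : Fin (k+1) → ℂ)
    (hα : ∑ j, ‖α j‖ = 1) (hα0 : ∀ j, α j ≠ 0) (β : ℝ) (hβ : -1 < β) :
    ∃ C : ℝ, 0 ≤ C ∧ ∀ ζ : ℂ, ‖ζ‖ < 1 →
      Vbeta (k+1) β {z | z ∈ polydisc (k+1) ∧ ‖∑ j, α j * z j ^ N - ζ‖ < 1 - ‖ζ‖} ≤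
        ENNReal.ofReal (C * (1 - ‖ζ‖) ^ (((k:ℝ)+1)*(β+1) + ((k:ℝ)+2)/2)) := by
  obtain ⟨C, hC, H⟩ := V_upper k N hN (fun j => ‖α j‖) (fun j => norm_pos_iff.2 (hα0 j)) hα β hβ
  refine ⟨C, hC, ?_⟩
  intro ζ hζ
  obtain ⟨ω, hω, hωζ⟩ : ∃ ω : ℂ, ‖ω‖ = 1 ∧ ζ = (‖ζ‖ : ℂ) * ω := by
    by_cases h : ζ = 0
    · exact ⟨1, by simp, by simp [h]⟩
    · have h' : (‖ζ‖ : ℂ) ≠ 0 := by exact_mod_cast norm_ne_zero_iff.2 h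
      refine ⟨ζ / ‖ζ‖, ?_, by field_simp⟩
      rw [norm_div, Complex.norm_real, norm_norm, div_self (norm_ne_zero_iff.2 h)]
  choose c hc hcN using fun j => exists_rot N hN (α j) ω (hα0 j) hω
  have hm : MeasurableSet {z : Fin (k+1) → ℂ | z ∈ polydisc (k+1) ∧
      ‖∑ j, α j * z j ^ N - ζ‖ < 1 - ‖ζ‖} := by
    apply (measurableSet_polydisc (k+1)).inter
    exact measurableSet_lt (f := fun z : Fin (k+1) → ℂ => ‖∑ j, α j * z j ^ N - ζ‖)
      (by fun_prop) measurable_const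
  rw [← (V_rot (k+1) β hβ c hc).measure_preimage hm.nullMeasurableSet]
  have h1 := H (1 - ‖ζ‖) (by linarith) (by linarith [norm_nonneg ζ])
  refine le_trans (measure_mono ?_) h1
  rintro z ⟨hz1, hz2⟩
  refine ⟨?_, ?_⟩
  · intro j
    have := hz1 j
    simpa [norm_mul, hc j] using this
  · have e : ∑ j, α j * (c j * z j) ^ N - ζ =
        ω * (∑ j, (‖α j‖ : ℂ) * z j ^ N - ((1 - (1 - ‖ζ‖) : ℝ) : ℂ)) := by
      rw [mul_sub, Finset.mul_sum]
      congr 1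
      · apply Finset.sum_congr rfl
        intro j _
        rw [mul_pow, ← mul_assoc, hcN]; ring
      · rw [_root_.sub_sub_cancel, mul_comm]; exact hωζ
    simp only at hz2
    rw [e, norm_mul, hω, one_mul] at hz2
    exact hz2

theorem g_norm_lt (n N : ℕ) (hn : 0 < n) (hN : 1 ≤ N) (α : Fin n → ℂ) (hα : ∑ j, ‖α j‖ = 1)
    (hα0 : ∀ j, α j ≠ 0) (z : Fin n → ℂ)
    (hz : z ∈ polydisc n) : ‖∑ j, α j * z j ^ N‖ < 1 := by
  refine (norm_sum_le _ _).trans_lt ?_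
  rw [← hα]
  have : Nonempty (Fin n) := ⟨⟨0, hn⟩⟩
  apply Finset.sum_lt_sum_of_nonempty Finset.univ_nonempty
  intro j _
  rw [norm_mul, norm_pow]
  exact mul_lt_of_lt_one_right (norm_pos_iff.2 (hα0 j))
    (pow_lt_one₀ (norm_nonneg _) (hz j) (by omega))


theorem sufficiency (k N : ℕ) (hk : 1 ≤ k) (hN : 1 ≤ N) (α : Fin (k+1) → ℂ)
    (hα : ∑ j, ‖α j‖ = 1) (hα0 : ∀ j, α j ≠ 0) (β : ℝ) (hβ : -1 < β)
    (Φ : (Fin (k+1) → ℂ) → (Fin (k+1) → ℂ))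
    (hΦ : ∀ z, ∀ i : Fin k, Φ z i.castSucc = ∑ j, α j * z j ^ N)
    (hΦl : ∀ z, Φ z (Fin.last k) = 0)
    (hM : (k:ℝ) * (β + 2) ≤ ((k:ℝ) + 1) * (β + 1) + ((k:ℝ) + 2) / 2) :
    bddBergman (k+1) β Φ := by
  obtain ⟨K, hK, HK⟩ := pt_est (k+1) β hβ
  obtain ⟨C, hC, HC⟩ := V_upper_rot k N hN α hα hα0 β hβ
  set M := ((k:ℝ) + 1) * (β + 1) + ((k:ℝ) + 2) / 2 with hMdef
  set p := (k:ℝ) * (β + 2) with hp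
  have hp0 : 0 ≤ p := by rw [hp]; have : 0 < β + 2 := by linarith
                         positivity
  set K2 : ℝ := (K ^ (k+1))⁻¹ * (3/2 : ℝ) ^ p with hK2
  have hK2p : 0 < K2 := by positivity
  refine ⟨K2 * C + 1, by positivity, ?_⟩
  intro f hf
  have hFm := Fsq_meas (k+1) f hf
  have : SFinite (Vbeta (k+1) β) := by rw [Vbeta_eq _ β hβ]; infer_instance
  set g : (Fin (k+1) → ℂ) → ℂ := fun z => ∑ j, α j * z j ^ N with hg
  have hgm : Measurable g := by rw [hg]; fun_prop
  set B : (Fin (k+1) → ℂ) → ℝ≥0∞ := fun ζ =>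
    ENNReal.ofReal (K2 * ((1 - ‖ζ 0‖) ^ p)⁻¹) * Fsq (k+1) f ζ with hB
  have hBm : Measurable B := by
    rw [hB]
    apply Measurable.mul _ hFm
    fun_prop
  set T : Set ((Fin (k+1) → ℂ) × (Fin (k+1) → ℂ)) :=
    {x | x.1 ∈ polydisc (k+1) ∧ ‖g x.1 - x.2 0‖ < 1 - ‖x.2 0‖} with hT
  have hTm : MeasurableSet T := by
    have h1 : MeasurableSet {x : (Fin (k+1) → ℂ) × (Fin (k+1) → ℂ) | x.1 ∈ polydisc (k+1)} :=
      measurable_fst (measurableSet_polydisc (k+1))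
    have h2 : MeasurableSet {x : (Fin (k+1) → ℂ) × (Fin (k+1) → ℂ) |
        ‖g x.1 - x.2 0‖ < 1 - ‖x.2 0‖} := by
      apply measurableSet_lt <;> fun_prop
    exact h1.inter h2
  set H : (Fin (k+1) → ℂ) → (Fin (k+1) → ℂ) → ℝ≥0∞ :=
    fun z ζ => T.indicator (fun x => B x.2) (z, ζ) with hH
  have hHm : Measurable (Function.uncurry H) := by
    have : Function.uncurry H = T.indicator (fun x => B x.2) := by
      ext x; rfl
    rw [this]
    exact (hBm.comp measurable_snd).indicator hTm
  have step1 : ∀ z ∈ polydisc (k+1), ENNReal.ofReal (‖f (Φ z)‖ ^ 2) ≤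
      ∫⁻ ζ, H z ζ ∂(Vbeta (k+1) β) := by
    intro z hz
    have hw : ‖g z‖ < 1 := g_norm_lt (k+1) N (by omega) hN α hα hα0 z hz
    have hΦz : ∀ i : Fin k, Φ z i.castSucc = g z := fun i => hΦ z i
    have hcp : Φ z ∈ polydisc (k+1) := by
      intro j
      refine Fin.lastCases ?_ (fun i => ?_) j
      · rw [hΦl]; simp
      · rw [hΦz]; exact hw
    have h1 := HK f hf (Φ z) hcp
    set t := 1 - ‖g z‖ with ht
    have htp : 0 < t := by linarith
    have hprod : ∏ j, ENNReal.ofReal (K * (1 - ‖Φ z j‖) ^ (β + 2)) =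
        ENNReal.ofReal (K ^ (k+1) * t ^ p) := by
      rw [Fin.prod_univ_castSucc]
      simp only [hΦz, hΦl, norm_zero, sub_zero, Real.one_rpow, mul_one, Finset.prod_const,
        Finset.card_univ, Fintype.card_fin]
      rw [← ENNReal.ofReal_pow (by positivity), ← ENNReal.ofReal_mul (by positivity)]
      congr 1
      rw [mul_pow, hp, mul_comm (k:ℝ), Real.rpow_mul_natCast htp.le]
      ring
    rw [hprod] at h1
    set A := K ^ (k+1) * t ^ p with hA
    have hAp : 0 < A := by positivity
    set Q : Set (Fin (k+1) → ℂ) := univ.pi fun j => ball (Φ z j) ((1 - ‖Φ z j‖) / 2) with hQ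
    have hQm : MeasurableSet Q := MeasurableSet.univ_pi (fun _ => measurableSet_ball)
    calc ENNReal.ofReal (‖f (Φ z)‖ ^ 2)
        = ENNReal.ofReal A⁻¹ * (ENNReal.ofReal (‖f (Φ z)‖ ^ 2) * ENNReal.ofReal A) := by
          rw [mul_comm, mul_assoc, ← ENNReal.ofReal_mul hAp.le, mul_inv_cancel₀ hAp.ne']; simp
      _ ≤ ENNReal.ofReal A⁻¹ * ∫⁻ ζ in Q, Fsq (k+1) f ζ ∂(Vbeta (k+1) β) := by gcongr
      _ = ∫⁻ ζ, Q.indicator (fun ζ => ENNReal.ofReal A⁻¹ * Fsq (k+1) f ζ) ζ ∂(Vbeta (k+1) β) := by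
          rw [lintegral_indicator hQm, lintegral_const_mul _ hFm]
      _ ≤ _ := by
          apply lintegral_mono
          intro ζ
          by_cases hζ : ζ ∈ Q
          swap
          · simp only [indicator_of_notMem hζ]; exact zero_le
          have h00 : (0 : Fin (k+1)) = (⟨0, hk⟩ : Fin k).castSucc := rfl
          have h2 : ‖ζ 0 - g z‖ < t / 2 := by
            have : ζ 0 ∈ ball (Φ z 0) ((1 - ‖Φ z 0‖) / 2) := hζ 0 (mem_univ 0)
            rw [h00, hΦz, mem_ball, dist_eq_norm] at this
            exact this
          have h3 := norm_sub_norm_le (ζ 0) (g z)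
          have h4 := norm_sub_norm_le (g z) (ζ 0)
          have h5 := norm_sub_rev (g z) (ζ 0)
          have hmT : (z, ζ) ∈ T := by
            refine ⟨hz, ?_⟩
            simp only
            linarith
          simp only [indicator_of_mem hζ, hH, indicator_of_mem hmT, hB]
          gcongr
          have hhp : 0 < 1 - ‖ζ 0‖ := by linarith
          have h6 : (1 - ‖ζ 0‖) ^ p ≤ (3/2 : ℝ) ^ p * t ^ p := by
            rw [← Real.mul_rpow (by norm_num) htp.le]
            apply Real.rpow_le_rpow hhp.le _ hp0
            linarith
          have h7 : 0 < (1 - ‖ζ 0‖) ^ p := by positivity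
          rw [hA, hK2, mul_inv, mul_assoc]
          gcongr
          rw [← div_eq_mul_inv, le_div_iff₀ h7, inv_mul_le_iff₀ (by positivity)]
          linarith
  calc ∫⁻ z, ENNReal.ofReal (‖f (Φ z)‖ ^ 2) ∂(Vbeta (k+1) β)
      ≤ ∫⁻ z, ∫⁻ ζ, H z ζ ∂(Vbeta (k+1) β) ∂(Vbeta (k+1) β) := by
        apply lintegral_mono_ae
        filter_upwards [ae_polydisc (k+1) β] with z hz using step1 z hz
    _ = ∫⁻ ζ, ∫⁻ z, H z ζ ∂(Vbeta (k+1) β) ∂(Vbeta (k+1) β) :=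
        lintegral_lintegral_swap hHm.aemeasurable
    _ ≤ ∫⁻ ζ, ENNReal.ofReal (K2 * C + 1) * ENNReal.ofReal (‖f ζ‖ ^ 2) ∂(Vbeta (k+1) β) := by
        apply lintegral_mono_ae
        filter_upwards [ae_polydisc (k+1) β] with ζ hζ
        have hh : 0 < 1 - ‖ζ 0‖ := by have := hζ 0; linarith
        have hV := HC (ζ 0) (hζ 0)
        have hSm : MeasurableSet {z | z ∈ polydisc (k+1) ∧ ‖∑ j, α j * z j ^ N - ζ 0‖ < 1 - ‖ζ 0‖} :=
          measurable_prodMk_right (y := ζ) hTm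
        have e : ∀ z, H z ζ = {z | z ∈ polydisc (k+1) ∧
            ‖∑ j, α j * z j ^ N - ζ 0‖ < 1 - ‖ζ 0‖}.indicator (fun _ => B ζ) z := fun z => rfl
        simp only [e]
        rw [lintegral_indicator_const hSm]
        have hF : Fsq (k+1) f ζ = ENNReal.ofReal (‖f ζ‖ ^ 2) := indicator_of_mem hζ _
        simp only [hB, hF]
        calc _ ≤ ENNReal.ofReal (K2 * ((1 - ‖ζ 0‖) ^ p)⁻¹) * ENNReal.ofReal (‖f ζ‖ ^ 2) *
              ENNReal.ofReal (C * (1 - ‖ζ 0‖) ^ M) := by gcongr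
          _ = ENNReal.ofReal (K2 * ((1 - ‖ζ 0‖) ^ p)⁻¹ * (C * (1 - ‖ζ 0‖) ^ M)) *
              ENNReal.ofReal (‖f ζ‖ ^ 2) := by
            rw [ENNReal.ofReal_mul (p := K2 * ((1 - ‖ζ 0‖) ^ p)⁻¹) (by positivity)]
            ring
          _ ≤ _ := by
            gcongr
            have h7 : 0 < (1 - ‖ζ 0‖) ^ p := by positivity
            have h8 : (1 - ‖ζ 0‖) ^ M ≤ (1 - ‖ζ 0‖) ^ p :=
              Real.rpow_le_rpow_of_exponent_ge hh (by linarith [norm_nonneg (ζ 0)]) hM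
            calc K2 * ((1 - ‖ζ 0‖) ^ p)⁻¹ * (C * (1 - ‖ζ 0‖) ^ M)
                ≤ K2 * ((1 - ‖ζ 0‖) ^ p)⁻¹ * (C * (1 - ‖ζ 0‖) ^ p) := by gcongr
              _ = K2 * C := by field_simp
              _ ≤ _ := by linarith
    _ = _ := lintegral_const_mul' _ _ ENNReal.ofReal_ne_top


theorem sum_of_powers_symbol_boundedness (n : ℕ) (hn : 2 ≤ n) (α : Fin n → ℂ)
    (hα : ∑ j, ‖α j‖ = 1) (hα0 : ∀ j, α j ≠ 0) (β : ℝ) (hβ : -1 < β) :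
    bddBergman n β (fun z i => if (i : ℕ) < n - 1 then ∑ j, α j * z j ^ n else 0) ↔
      (n : ℝ) / 2 ≤ β + 5 / 2 := by
  obtain ⟨k, rfl⟩ : ∃ k, n = k + 1 := ⟨n - 1, by omega⟩
  push_cast
  constructor
  · intro hb
    have := necessity k (k+1) (by omega) α hα hα0 β hβ _ (by intro z i; simp) hb
    linarith
  · intro h
    apply sufficiency k (k+1) (by omega) (by omega) α hα hα0 β hβ
    · intro z i; simp
    · intro z; simp
    · linarith


end
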